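/- arXiv:2203.17029 — 3 statements merged into one kernel-verified Lean document; each statement's English description precedes it below -/
import Mathlib

section
/- Let q ∈ ℂ with 0 < |q| < 1, let x ∈ ℂ∖{0} with x² ∉ q^ℤ, and let t ∈ ℂ∖{0} with t ∉ q^ℤ. Then f^{(−1)}(t,x,q) = − g^{(0,x^{−1})}(t,x,q) − g^{(0,x)}(t,x,q). -/
open Finset Filter

/-- Finite q-Pochhammer symbol `(x;q)_k = ∏_{j=0}^{k-1} (1 - x q^j)`. -/
noncomputable def qPoch (x q : ℂ) (k : ℕ) : ℂ := ∏ j ∈ Finset.range k, (1 - x * q ^ j)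

/-- Infinite q-Pochhammer symbol `(x;q)_∞ = ∏_{j=0}^{∞} (1 - x q^j)`. -/
noncomputable def qPochInf (x q : ℂ) : ℂ := ∏' j : ℕ, (1 - x * q ^ j)

/-- The Jacobi theta function `θ(t;q) = Σ_{k∈ℤ} (−1)^k q^{k(k+1)/2} t^k`. -/
noncomputable def jtheta (t q : ℂ) : ℂ :=
  ∑' k : ℤ, (-1 : ℂ) ^ k * q ^ (k * (k + 1) / 2) * t ^ k

/-- The derivative `θ'(t;q) = Σ_{k∈ℤ} (−1)^k k q^{k(k+1)/2} t^k` (with respect to t d/dt). -/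
noncomputable def jthetaD (t q : ℂ) : ℂ :=
  ∑' k : ℤ, (-1 : ℂ) ^ k * (k : ℂ) * q ^ (k * (k + 1) / 2) * t ^ k

/-- The Eisenstein-type series `E₁(q) = 1 − 4 Σ_{j=1}^∞ q^j/(1−q^j)`. -/
noncomputable def E1 (q : ℂ) : ℂ := 1 - 4 * ∑' j : ℕ, q ^ (j + 1) / (1 - q ^ (j + 1))

/-- The Appell-Lerch sum
`AL(t,λ,q) = θ(λ;q)⁻¹ Σ_{ℓ∈ℤ} (−1)^ℓ q^{ℓ(ℓ+1)/2} λ^ℓ / (1 − λ t q^ℓ)`. -/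
noncomputable def AL (t lam q : ℂ) : ℂ :=
  (jtheta lam q)⁻¹ *
    ∑' k : ℤ, (-1 : ℂ) ^ k * q ^ (k * (k + 1) / 2) * lam ^ k / (1 - lam * t * q ^ k)

/-- The solution `g^{(0,0)}(t,q) = Σ_{k≥0} (−1)^k q^{k(k+1)/2} (q;q)_k^{−2} t^{−1−k}`. -/
noncomputable def g00 (t q : ℂ) : ℂ :=
  ∑' k : ℕ, (-1 : ℂ) ^ k * q ^ (k * (k + 1) / 2) / (qPoch q q k) ^ 2 * t ^ (-1 - (k : ℤ))

/-- The solution `g^{(0,1)}(t,q)`. -/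
noncomputable def g01 (t q : ℂ) : ℂ :=
  ∑' k : ℕ,
    (E1 q / 2 - 1 / 2 - jthetaD t⁻¹ q / jtheta t⁻¹ q +
        ∑ j ∈ Finset.range k, (1 + q ^ (j + 1)) / (1 - q ^ (j + 1))) *
      ((-1 : ℂ) ^ k * q ^ (k * (k + 1) / 2) / (qPoch q q k) ^ 2 * t ^ (-1 - (k : ℤ)))

/-- The solution `f^{(−1)}(t,x,q)` at `t = 0` of the x-deformed 4₁ equation. -/
noncomputable def fneg1 (t x q : ℂ) : ℂ :=
  jtheta (q⁻¹ * x) q / ((1 - x) * jtheta (q⁻¹ * t) q * qPochInf q q) *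
    ∑' k : ℕ, ∑ l ∈ Finset.range (k + 1),
      (-1 : ℂ) ^ k * q ^ (k * (k + 1) / 2) * x ^ (2 * (l : ℤ) - k) * t ^ k /
        (qPoch q q l * qPoch q q (k - l))

/-- The solution `g^{(0,x^{−1})}(t,x,q)` at `t = ∞` of the x-deformed 4₁ equation.
The solution `g^{(0,x)}(t,x,q)` is `gxinv t x⁻¹ q`. -/
noncomputable def gxinv (t x q : ℂ) : ℂ :=
  jtheta (q⁻¹ * x) q * jtheta (t * x) q * qPochInf (q * x ^ 2) q /
      (jtheta t q * jtheta (x ^ 2) q * (1 - x) * qPochInf q q) *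
    ∑' k : ℕ, (-1 : ℂ) ^ k * q ^ (k * (k + 1) / 2) * x ^ k * t ^ (-(k : ℤ) - 1) /
      (qPoch q q k * qPoch (q * x ^ 2) q k)

open Topology

lemma tri_two (k : ℤ) : 2 * (k * (k + 1) / 2) = k * (k + 1) :=
  Int.mul_ediv_cancel' (Int.even_mul_succ_self k).two_dvd

lemma tri_sub_one (k : ℤ) : (k - 1) * (k - 1 + 1) / 2 = k * (k + 1) / 2 - k := by
  have h1 := tri_two k
  have h2 := tri_two (k - 1)
  have : (k - 1) * (k - 1 + 1) = k * (k + 1) - 2 * k := by ring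
  omega

lemma tri_add (a b : ℤ) :
    (a + b) * (a + b + 1) / 2 = a * (a + 1) / 2 + b * (b + 1) / 2 + a * b := by
  have h1 := tri_two a
  have h2 := tri_two b
  have h3 := tri_two (a + b)
  have : (a + b) * (a + b + 1) = a * (a + 1) + b * (b + 1) + 2 * (a * b) := by ring
  omega

lemma tri_cast (k : ℕ) : ((k * (k + 1) / 2 : ℕ) : ℤ) = (k : ℤ) * (k + 1) / 2 := by
  push_cast; rfl

lemma qpow_tri (q : ℂ) (k : ℕ) : q ^ ((k : ℤ) * (k + 1) / 2) = q ^ (k * (k + 1) / 2) := by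
  rw [← tri_cast, zpow_natCast]

lemma qPoch_zero (c q : ℂ) : qPoch c q 0 = 1 := by simp [qPoch]

lemma qPoch_succ (c q : ℂ) (n : ℕ) : qPoch c q (n + 1) = qPoch c q n * (1 - c * q ^ n) := by
  simp [qPoch, Finset.prod_range_succ]

lemma summable_cq {q : ℂ} (hq1 : ‖q‖ < 1) (c : ℂ) : Summable fun j : ℕ => ‖-(c * q ^ j)‖ := by
  simp only [norm_neg, norm_mul, norm_pow]
  exact (summable_geometric_of_lt_one (norm_nonneg q) hq1).mul_left _

lemma qPoch_tendsto {q : ℂ} (hq1 : ‖q‖ < 1) (c : ℂ) :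
    Tendsto (qPoch c q) atTop (𝓝 (qPochInf c q)) := by
  have h := (multipliable_one_add_of_summable (summable_cq hq1 c)).hasProd.tendsto_prod_nat
  simp only [← sub_eq_add_neg] at h
  exact h

lemma qPochInf_ne_zero {q : ℂ} (hq1 : ‖q‖ < 1) {c : ℂ} (hc : ∀ j : ℕ, 1 - c * q ^ j ≠ 0) :
    qPochInf c q ≠ 0 := by
  have := tprod_one_add_ne_zero_of_summable (f := fun j : ℕ => -(c * q ^ j))
    (by intro j; simpa [← sub_eq_add_neg] using hc j) (summable_cq hq1 c)
  simpa [qPochInf, ← sub_eq_add_neg] using this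

lemma qPoch_ne_zero {q c : ℂ} (hc : ∀ j : ℕ, 1 - c * q ^ j ≠ 0) (n : ℕ) : qPoch c q n ≠ 0 :=
  Finset.prod_ne_zero_iff.2 fun j _ => hc j

lemma qPoch_bdd {q : ℂ} (hq1 : ‖q‖ < 1) (c : ℂ) : ∃ C : ℝ, 0 ≤ C ∧ ∀ n, ‖qPoch c q n‖ ≤ C := by
  obtain ⟨C, hC⟩ := (Metric.isBounded_range_of_tendsto _ (qPoch_tendsto hq1 c)).exists_norm_le
  exact ⟨C, (norm_nonneg _).trans (hC _ ⟨0, rfl⟩), fun n => hC _ ⟨n, rfl⟩⟩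

lemma qPoch_inv_bdd {q : ℂ} (hq1 : ‖q‖ < 1) {c : ℂ} (hc : ∀ j : ℕ, 1 - c * q ^ j ≠ 0) :
    ∃ C : ℝ, 0 ≤ C ∧ ∀ n, ‖(qPoch c q n)⁻¹‖ ≤ C := by
  obtain ⟨C, hC⟩ := (Metric.isBounded_range_of_tendsto _
    ((qPoch_tendsto hq1 c).inv₀ (qPochInf_ne_zero hq1 hc))).exists_norm_le
  exact ⟨C, (norm_nonneg _).trans (hC _ ⟨0, rfl⟩), fun n => hC _ ⟨n, rfl⟩⟩

lemma one_sub_qq {q : ℂ} (hq1 : ‖q‖ < 1) (j : ℕ) : 1 - q * q ^ j ≠ 0 := by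
  intro h
  have h2 : ‖q ^ (j + 1)‖ = 1 := by
    rw [pow_succ', ← sub_eq_zero.1 h, norm_one]
  rw [norm_pow] at h2
  exact (pow_lt_one₀ (norm_nonneg q) hq1 (Nat.succ_ne_zero j)).ne h2

lemma one_sub_zpow {q : ℂ} (hq0 : 0 < ‖q‖) (hq1 : ‖q‖ < 1) (n : ℤ) (hn : n ≠ 0) : 1 - q ^ n ≠ 0 := by
  intro h
  have h2 : ‖q ^ n‖ = 1 := by rw [← sub_eq_zero.1 h, norm_one]
  rw [norm_zpow] at h2
  have := (zpow_eq_one_iff_right₀ hq0.le hq1.ne).1 h2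
  exact hn this

lemma summable_gauss {r : ℝ} (hr0 : 0 < r) (hr1 : r < 1) (B : ℝ) (hB : 0 < B) :
    Summable fun k : ℕ => r ^ (k * (k + 1) / 2) * B ^ k := by
  apply summable_of_ratio_test_tendsto_lt_one (l := 0) one_pos
  · exact Eventually.of_forall fun k => by positivity
  · have h : ∀ k : ℕ, ‖r ^ ((k + 1) * (k + 1 + 1) / 2) * B ^ (k + 1)‖ / ‖r ^ (k * (k + 1) / 2) * B ^ k‖
        = r * B * r ^ k := by
      intro k
      have e : (k + 1) * (k + 1 + 1) / 2 = k * (k + 1) / 2 + (k + 1) := by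
        rw [show (k + 1) * (k + 1 + 1) = k * (k + 1) + 2 * (k + 1) by ring]
        omega
      rw [e, Real.norm_of_nonneg (by positivity), Real.norm_of_nonneg (by positivity)]
      field_simp
      ring
    simp only [h]
    simpa using (tendsto_pow_atTop_nhds_zero_of_lt_one hr0.le hr1).const_mul (r * B)

lemma summable_theta {q : ℂ} (hq0 : 0 < ‖q‖) (hq1 : ‖q‖ < 1) {t : ℂ} (ht : t ≠ 0) :
    Summable fun k : ℤ => ‖(-1 : ℂ) ^ k * q ^ (k * (k + 1) / 2) * t ^ k‖ := by
  have ht' : 0 < ‖t‖ := norm_pos_iff.2 ht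
  simp only [norm_mul, norm_zpow, norm_neg, norm_one, one_zpow, one_mul]
  apply Summable.of_nat_of_neg_add_one
  · refine (summable_gauss hq0 hq1 ‖t‖ ht').congr fun k => ?_
    rw [← tri_cast, zpow_natCast, zpow_natCast]
  · refine ((summable_gauss hq0 hq1 ‖t‖⁻¹ (inv_pos.2 ht')).mul_left ‖t‖⁻¹).congr fun k => ?_
    have : (-((k : ℤ) + 1)) * (-((k : ℤ) + 1) + 1) / 2 = ((k * (k + 1) / 2 : ℕ) : ℤ) := by
      rw [tri_cast]; congr 1; ring
    rw [this, zpow_natCast, zpow_neg, ← inv_zpow,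
      show ((k : ℤ) + 1) = ((k + 1 : ℕ) : ℤ) by push_cast; rfl, zpow_natCast, pow_succ]
    ring

lemma jtheta_shift (q : ℂ) (hq : q ≠ 0) (t : ℂ) (ht : t ≠ 0) :
    jtheta (q⁻¹ * t) q = -t * jtheta t q := by
  unfold jtheta
  rw [← (Equiv.addRight (1 : ℤ)).tsum_eq, ← tsum_mul_left]
  refine tsum_congr fun k => ?_
  simp only [Equiv.coe_addRight]
  have := tri_add k 1
  norm_num at this
  rw [this, mul_zpow, inv_zpow, zpow_add₀ hq, zpow_add₀ hq, zpow_add₀ hq, zpow_add₀ ht, 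
    zpow_add₀ (by norm_num : (-1 : ℂ) ≠ 0)]
  have := zpow_ne_zero k hq
  field_simp

lemma jtheta_inv (q : ℂ) (t : ℂ) (ht : t ≠ 0) :
    jtheta t⁻¹ q = -t * jtheta t q := by
  unfold jtheta
  rw [← ((Equiv.neg ℤ).trans (Equiv.subRight (1 : ℤ))).tsum_eq, ← tsum_mul_left]
  refine tsum_congr fun k => ?_
  simp only [Equiv.trans_apply, Equiv.neg_apply, Equiv.subRight_apply]
  rw [show (-k - 1) * (-k - 1 + 1) = k * (k + 1) by ring, inv_zpow', 
    show -(-k - 1) = k + 1 by ring, zpow_add₀ ht, zpow_sub₀ (by norm_num : (-1 : ℂ) ≠ 0), zpow_neg,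
    ← inv_zpow]
  norm_num
  ring

/-- `1/(q;q)_n`, extended by zero to negative `n`. -/
noncomputable def ipq (q : ℂ) (n : ℤ) : ℂ := if 0 ≤ n then (qPoch q q n.toNat)⁻¹ else 0

lemma ipq_nat (q : ℂ) (n : ℕ) : ipq q n = (qPoch q q n)⁻¹ := by simp [ipq]

lemma ipq_neg (q : ℂ) {n : ℤ} (hn : n < 0) : ipq q n = 0 := by simp [ipq, hn]

lemma ipq_rec {q : ℂ} (hq1 : ‖q‖ < 1) (n : ℤ) : ipq q (n - 1) = (1 - q ^ n) * ipq q n := by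
  rcases lt_trichotomy n 0 with h | h | h
  · rw [ipq_neg q h, ipq_neg q (by omega)]; simp
  · subst h; rw [ipq_neg q (by omega)]; simp
  · obtain ⟨m, rfl⟩ : ∃ m : ℕ, n = (m : ℤ) + 1 := ⟨(n - 1).toNat, by omega⟩
    have e : ((m : ℤ) + 1) = ((m + 1 : ℕ) : ℤ) := by push_cast; rfl
    rw [add_sub_cancel_right, e, ipq_nat, ipq_nat, qPoch_succ, zpow_natCast, pow_succ']
    have := one_sub_qq hq1 m
    have := qPoch_ne_zero (one_sub_qq hq1) m
    field_simp

lemma ipq_bdd {q : ℂ} (hq1 : ‖q‖ < 1) : ∃ C : ℝ, 0 ≤ C ∧ ∀ n, ‖ipq q n‖ ≤ C := by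
  obtain ⟨C, hC0, hC⟩ := qPoch_inv_bdd hq1 (one_sub_qq hq1)
  refine ⟨C, hC0, fun n => ?_⟩
  unfold ipq
  split_ifs
  · exact hC _
  · simpa using hC0

lemma ipq_tendsto {q : ℂ} (hq1 : ‖q‖ < 1) : Tendsto (ipq q) atTop (𝓝 (qPochInf q q)⁻¹) := by
  have h := ((qPoch_tendsto hq1 q).inv₀ (qPochInf_ne_zero hq1 (one_sub_qq hq1)))
  have h2 : Tendsto (fun n : ℤ => n.toNat) atTop atTop := 
    tendsto_atTop.2 fun b => (eventually_ge_atTop (b : ℤ)).mono fun a ha => by omega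
  refine (h.comp h2).congr' ?_
  filter_upwards [eventually_ge_atTop 0] with n hn
  simp [ipq, hn]

/-- Coefficients of the finite triple product. -/
noncomputable def cab (q : ℂ) (a b : ℕ) (k : ℤ) : ℂ :=
  qPoch q q (a + b) * ipq q (b + k) * ipq q (a - k) * ((-1) ^ k * q ^ (k * (k + 1) / 2))

lemma cab_succ_left {q : ℂ} (hq0 : q ≠ 0) (hq1 : ‖q‖ < 1) (a b : ℕ) (k : ℤ) :
    cab q (a + 1) b k = cab q a b k - q ^ (a + 1) * cab q a b (k - 1) := by
  unfold cab
  have h1 := ipq_rec hq1 (b + k)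
  have h2 := ipq_rec hq1 (a + 1 - k)
  rw [show (b : ℤ) + (k - 1) = b + k - 1 by ring, h1,
    show (a : ℤ) - k = a + 1 - k - 1 by ring, h2,
    show (a : ℤ) - (k - 1) = a + 1 - k by ring, tri_sub_one,
    show a + 1 + b = a + b + 1 by ring, qPoch_succ]
  push_cast
  rw [zpow_sub₀ hq0, zpow_sub₀ hq0, zpow_sub₀ (by norm_num : (-1 : ℂ) ≠ 0), zpow_add₀ hq0,
    zpow_add₀ hq0]
  simp only [zpow_natCast, zpow_one]
  have := zpow_ne_zero k hq0
  field_simp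
  ring

lemma cab_succ_right {q : ℂ} (hq0 : q ≠ 0) (hq1 : ‖q‖ < 1) (a b : ℕ) (k : ℤ) :
    cab q a (b + 1) k = cab q a b k - q ^ b * cab q a b (k + 1) := by
  unfold cab
  have h1 := ipq_rec hq1 (b + 1 + k)
  have h2 := ipq_rec hq1 (a - k)
  have h3 := tri_add k 1
  norm_num at h3
  rw [show (b : ℤ) + (k + 1) = b + 1 + k by ring, 
    show (a : ℤ) - (k + 1) = a - k - 1 by ring, h2,
    show (b : ℤ) + k = b + 1 + k - 1 by ring, h1, h3,
    show a + (b + 1) = a + b + 1 by ring, qPoch_succ]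
  push_cast
  rw [zpow_sub₀ hq0, zpow_add₀ hq0 _ k, zpow_add₀ hq0 _ 1, zpow_add₀ hq0 _ k, zpow_add₀ hq0 _ 1,
    zpow_add₀ (by norm_num : (-1 : ℂ) ≠ 0)]
  simp only [zpow_natCast, zpow_one]
  have := zpow_ne_zero k hq0
  field_simp
  ring

lemma hasSum_of_eq {ι : Type*} {f g : ι → ℂ} {r s : ℂ} (h : HasSum f s) (hf : ∀ k, g k = f k)
    (hs : r = s) : HasSum g r := by
  rw [funext hf, hs]; exact h

lemma finite_jtp {q : ℂ} (hq0 : q ≠ 0) (hq1 : ‖q‖ < 1) {y : ℂ} (hy : y ≠ 0) (N : ℕ) :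
    HasSum (fun k : ℤ => cab q N N k * y ^ k) (qPoch (q * y) q N * qPoch y⁻¹ q N) := by
  induction N with
  | zero =>
    convert hasSum_single (f := fun k : ℤ => cab q 0 0 k * y ^ k) 0 ?_ using 1
    · simp [cab, qPoch_zero, ipq]
    · intro k hk
      rcases lt_or_gt_of_ne hk with h | h
      · simp [cab, ipq_neg q h]
      · simp [cab, ipq_neg q (show -k < 0 by omega)]
  | succ N ih =>
    have h1 : HasSum (fun k : ℤ => cab q (N + 1) N k * y ^ k)
        (qPoch (q * y) q N * qPoch y⁻¹ q N * (1 - q * y * q ^ N)) := by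
      have h := ((Equiv.subRight (1 : ℤ)).hasSum_iff.2 ih).mul_left (q ^ (N + 1) * y)
      refine hasSum_of_eq (ih.sub h) (fun k => ?_) ?_
      · simp only [Function.comp, Equiv.subRight_apply]
        rw [cab_succ_left hq0 hq1, zpow_sub₀ hy]
        field_simp
      · ring
    have h := ((Equiv.addRight (1 : ℤ)).hasSum_iff.2 h1).mul_left (q ^ N * y⁻¹)
    refine hasSum_of_eq (h1.sub h) (fun k => ?_) ?_
    · simp only [Function.comp, Equiv.coe_addRight]
      rw [cab_succ_right hq0 hq1, zpow_add₀ hy]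
      field_simp
    · rw [qPoch_succ, qPoch_succ]; ring

lemma jtp {q : ℂ} (hq0 : 0 < ‖q‖) (hq1 : ‖q‖ < 1) {y : ℂ} (hy : y ≠ 0) :
    jtheta y q = qPochInf q q * qPochInf (q * y) q * qPochInf y⁻¹ q := by
  have hq : q ≠ 0 := norm_pos_iff.1 hq0
  have hne := qPochInf_ne_zero hq1 (one_sub_qq hq1)
  obtain ⟨C1, hC1, h1⟩ := qPoch_bdd hq1 q
  obtain ⟨C2, hC2, h2⟩ := ipq_bdd hq1
  have hlim := tendsto_tsum_of_dominated_convergence (𝓕 := atTop)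
    (f := fun (N : ℕ) (k : ℤ) => cab q N N k * y ^ k)
    (g := fun k => (qPochInf q q)⁻¹ * ((-1 : ℂ) ^ k * q ^ (k * (k + 1) / 2) * y ^ k))
    (bound := fun k => C1 * C2 * C2 * ‖(-1 : ℂ) ^ k * q ^ (k * (k + 1) / 2) * y ^ k‖)
    ((summable_theta hq0 hq1 hy).mul_left _) ?_ ?_
  · rw [tsum_mul_left] at hlim
    have hlim2 := (qPoch_tendsto hq1 (q * y)).mul (qPoch_tendsto hq1 y⁻¹)
    have := tendsto_nhds_unique hlim (hlim2.congr fun N => (finite_jtp hq hq1 hy N).tsum_eq.symm)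
    change (qPochInf q q)⁻¹ * jtheta y q = _ at this
    rw [mul_assoc, ← this]
    field_simp
  · intro k
    have ha : Tendsto (fun N : ℕ => qPoch q q (N + N)) atTop (𝓝 (qPochInf q q)) :=
      (qPoch_tendsto hq1 q).comp (tendsto_atTop_mono (fun n => by simp) tendsto_id)
    have hb : Tendsto (fun N : ℕ => ipq q (N + k)) atTop (𝓝 (qPochInf q q)⁻¹) :=
      (ipq_tendsto hq1).comp (tendsto_atTop_add_const_right _ k tendsto_natCast_atTop_atTop)
    have hc : Tendsto (fun N : ℕ => ipq q (N - k)) atTop (𝓝 (qPochInf q q)⁻¹) :=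
      (ipq_tendsto hq1).comp (tendsto_atTop_add_const_right _ (-k) tendsto_natCast_atTop_atTop)
    have h := ((ha.mul hb).mul hc).mul_const ((-1 : ℂ) ^ k * q ^ (k * (k + 1) / 2) * y ^ k)
    rw [mul_inv_cancel₀ hne, one_mul] at h
    refine h.congr fun N => ?_
    unfold cab
    ring
  · refine Eventually.of_forall fun N k => ?_
    have : cab q N N k * y ^ k = qPoch q q (N + N) * ipq q (N + k) * ipq q (N - k) *
        ((-1 : ℂ) ^ k * q ^ (k * (k + 1) / 2) * y ^ k) := by unfold cab; ring
    rw [this, norm_mul, norm_mul (_ * _) (ipq _ _), norm_mul (qPoch _ _ _)]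
    gcongr
    · exact h1 _
    · exact h2 _
    · exact h2 _

/-- Coefficients of the residue sums. -/
noncomputable def alc (c q : ℂ) (k : ℕ) : ℂ :=
  q ^ (k * (k + 1)) * c ^ k / (qPoch q q k * qPoch (q * c) q k)

lemma prod_lower {q : ℂ} {c : ℂ} (hc : c ≠ 0) (i : ℕ) :
    ∏ j ∈ range i, (q ^ i - c * q ^ j) =
      (-c) ^ i * (∏ j ∈ range i, q ^ j) * qPoch (q * c⁻¹) q i := by
  have h : qPoch (q * c⁻¹) q i = ∏ j ∈ range i, (1 - q * c⁻¹ * q ^ (i - 1 - j)) := by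
    unfold qPoch
    exact (Finset.prod_range_reflect (fun j => 1 - q * c⁻¹ * q ^ j) i).symm
  have h2 : (-c) ^ i = ∏ j ∈ range i, (-c) := by simp
  rw [h, h2, ← Finset.prod_mul_distrib, ← Finset.prod_mul_distrib]
  refine Finset.prod_congr rfl fun j hj => ?_
  obtain ⟨m, rfl⟩ : ∃ m, i = j + 1 + m := ⟨i - (j + 1), by have := Finset.mem_range.1 hj; omega⟩
  rw [show j + 1 + m - 1 - j = m by omega]
  field_simp
  ring

lemma prod_upper (q c : ℂ) (i m : ℕ) :
    ∏ j ∈ range m, (q ^ i - c * q ^ (i + j)) = (q ^ i) ^ m * qPoch c q m := by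
  have h2 : (q ^ i) ^ m = ∏ j ∈ range m, q ^ i := by simp
  rw [h2, qPoch, ← Finset.prod_mul_distrib]
  refine Finset.prod_congr rfl fun j hj => ?_
  ring

lemma prod_tri (q : ℂ) (i : ℕ) : (∏ j ∈ range i, q ^ j) ^ 2 * q ^ i = q ^ (i * i) := by
  induction i with
  | zero => simp
  | succ i ih =>
    rw [Finset.prod_range_succ]
    have : q ^ ((i + 1) * (i + 1)) = q ^ (i * i) * q ^ i * q ^ i * q := by ring
    rw [this, ← ih]
    ring

lemma prod_all {q : ℂ} {c : ℂ} (hc : c ≠ 0) (i m : ℕ) :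
    ∏ j ∈ range (i + m + 1), (q ^ i - c * q ^ j) =
      ((-c) ^ i * (∏ j ∈ range i, q ^ j) * qPoch (q * c⁻¹) q i) *
        ((q ^ i) ^ (m + 1) * qPoch c q (m + 1)) := by
  rw [add_assoc, Finset.prod_range_add, prod_lower hc, prod_upper]

lemma prod_erase_all {q : ℂ} (i m : ℕ) :
    ∏ j ∈ (range (i + m + 1)).erase i, (q ^ i - q ^ j) =
      ((-1) ^ i * (∏ j ∈ range i, q ^ j) * qPoch q q i) *
        ((q ^ i) ^ m * qPoch q q m) := by
  have h1 : ∏ j ∈ (range (i + m + 1)).erase i, (q ^ i - q ^ j) =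
      ∏ j ∈ (range (i + m + 1)).erase i, (if j = i then 1 else q ^ i - 1 * q ^ j) := by
    refine Finset.prod_congr rfl fun j hj => ?_
    rw [if_neg (Finset.ne_of_mem_erase hj), one_mul]
  rw [h1, Finset.prod_erase _ (by simp), add_assoc, Finset.prod_range_add,
    Finset.prod_range_succ' _ m]
  have h2 : ∏ j ∈ range i, (if j = i then 1 else q ^ i - 1 * q ^ j) =
      ∏ j ∈ range i, (q ^ i - 1 * q ^ j) := by
    refine Finset.prod_congr rfl fun j hj => ?_
    rw [if_neg (Finset.mem_range.1 hj).ne]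
  have h3 : ∏ j ∈ range m, (if i + (j + 1) = i then 1 else q ^ i - 1 * q ^ (i + (j + 1))) =
      ∏ j ∈ range m, (q ^ i - q * q ^ (i + j)) := by
    refine Finset.prod_congr rfl fun j hj => ?_
    rw [if_neg (by omega)]
    ring
  rw [h2, h3, prod_lower one_ne_zero, prod_upper]
  simp

lemma node_term {q : ℂ} (hq0 : q ≠ 0) {y : ℂ} (hy : y ≠ 0) (e : ℕ) (he : e ≤ 1) (i m : ℕ) :
    (q ^ i) ^ (2 * (i + m) + 1 - e) / 
      ((∏ j ∈ (range (i + m + 1)).erase i, (q ^ i - q ^ j)) *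
        ∏ j ∈ range (i + m + 1), (q ^ i - y * q ^ j)) =
    alc y⁻¹ q i * q ^ ((i : ℤ) * (-(e : ℤ))) * ((qPoch q q m)⁻¹ * (qPoch y q (m + 1))⁻¹) := by
  have h1 : (q ^ i) ^ (2 * (i + m) + 1 - e) = 
      (q ^ i) ^ (2 * (i + m) + 1) * q ^ ((i : ℤ) * (-(e : ℤ))) := by
    have : (q ^ i) ^ (2 * (i + m) + 1) = (q ^ i) ^ (2 * (i + m) + 1 - e) * (q ^ i) ^ e := by
      rw [← pow_add]; congr 1; omega
    rw [this, mul_neg, zpow_neg, zpow_mul, zpow_natCast, zpow_natCast]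
    field_simp
  have h2 : (q ^ i) ^ (2 * (i + m) + 1) =
      q ^ (i * (i + 1)) * (∏ j ∈ range i, q ^ j) ^ 2 * (q ^ i) ^ m * (q ^ i) ^ (m + 1) := by
    have : q ^ (i * (i + 1)) * (∏ j ∈ range i, q ^ j) ^ 2 = q ^ (2 * (i * i)) := by
      rw [mul_add, pow_add, mul_one, mul_assoc, mul_comm (q ^ i), prod_tri]; ring
    rw [this]; ring
  have h3 : (∏ j ∈ range i, q ^ j) ≠ 0 := Finset.prod_ne_zero_iff.2 fun j _ => pow_ne_zero _ hq0
  rw [prod_all hy, prod_erase_all, h1, h2, alc]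
  have hA : (-1 : ℂ) ^ i * (-y) ^ i = y ^ i := by rw [← mul_pow]; simp
  have hqi : q ^ i ≠ 0 := pow_ne_zero _ hq0
  generalize (∏ j ∈ range i, q ^ j) = P at *
  have : ((-1) ^ i * P * qPoch q q i * ((q ^ i) ^ m * qPoch q q m) *
      ((-y) ^ i * P * qPoch (q * y⁻¹) q i * ((q ^ i) ^ (m + 1) * qPoch y q (m + 1)))) =
      (P ^ 2 * (q ^ i) ^ m * (q ^ i) ^ (m + 1)) * (y ^ i * (qPoch q q i * qPoch (q * y⁻¹) q i) *
        (qPoch q q m * qPoch y q (m + 1))) := by rw [← hA]; ring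
  rw [this]
  have hB : P ^ 2 * (q ^ i) ^ m * (q ^ i) ^ (m + 1) ≠ 0 := by positivity
  rw [show q ^ (i * (i + 1)) * P ^ 2 * (q ^ i) ^ m * (q ^ i) ^ (m + 1) * q ^ ((i : ℤ) * (-(e : ℤ))) =
    (P ^ 2 * (q ^ i) ^ m * (q ^ i) ^ (m + 1)) * (q ^ (i * (i + 1)) * q ^ ((i : ℤ) * (-(e : ℤ)))) by ring,
    mul_div_mul_left _ _ hB, inv_pow]
  simp only [div_eq_mul_inv, mul_inv]
  ring

/-- The summand of the finite partial fraction identity. -/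
noncomputable def fN (q y : ℂ) (e N i : ℕ) : ℂ :=
  if i ∈ range (N + 1) then
    alc y⁻¹ q i * q ^ ((i : ℤ) * (-(e : ℤ))) * ((qPoch q q (N - i))⁻¹ * (qPoch y q (N - i + 1))⁻¹)
  else 0

lemma finite_pf {q : ℂ} (hq0 : 0 < ‖q‖) (hq1 : ‖q‖ < 1) {y : ℂ} (hy : y ≠ 0)
    (hyq : ∀ n : ℤ, y ≠ q ^ n) (e : ℕ) (he : e ≤ 1) (N : ℕ) :
    ∑' i, fN q y e N i + y ^ (-(e : ℤ)) * ∑' i, fN q y⁻¹ e N i = if e = 0 then 1 else 0 := by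
  have hq : q ≠ 0 := norm_pos_iff.1 hq0
  have hinj : ∀ i j : ℕ, q ^ i = q ^ j → i = j := by
    intro i j h
    have := congrArg norm h
    rw [norm_pow, norm_pow] at this
    exact pow_right_injective₀ hq0 hq1.ne this
  have hne : ∀ i j : ℕ, q ^ i ≠ y * q ^ j := by
    intro i j h
    apply hyq ((i : ℤ) - j)
    rw [zpow_sub₀ hq, zpow_natCast, zpow_natCast, h]
    field_simp
  have hL := Lagrange.coeff_eq_sum (F := ℂ) (s := (range (N + 1)).disjSum (range (N + 1)))
    (v := Sum.elim (fun i : ℕ => q ^ i) (fun i : ℕ => y * q ^ i)) (P := Polynomial.X ^ (2 * N + 1 - e))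
    ?_ ?_
  · rw [Finset.card_disjSum, Finset.card_range, Finset.sum_disjSum, Polynomial.coeff_X_pow] at hL
    have hi : ∀ y : ℂ, ∑' i, fN q y e N i = ∑ i ∈ range (N + 1), fN q y e N i := fun y => by
      apply tsum_eq_sum
      intro i hi
      rw [fN, if_neg hi]
    have e1 : (if N + 1 + (N + 1) - 1 = 2 * N + 1 - e then (1 : ℂ) else 0) = if e = 0 then 1 else 0 := by
      congr 1
      simp only [eq_iff_iff]; omega
    rw [e1] at hL
    rw [hL, hi, hi, Finset.mul_sum]
    congr 1
    · refine Finset.sum_congr rfl fun i hi => ?_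
      have hE : ((range (N + 1)).disjSum (range (N + 1))).erase (Sum.inl i) =
          ((range (N + 1)).erase i).disjSum (range (N + 1)) := by
        ext (a | a) <;> simp
      obtain ⟨m, rfl⟩ : ∃ m, N = i + m := ⟨N - i, by have := Finset.mem_range.1 hi; omega⟩
      rw [hE, Finset.prod_disjSum, fN, if_pos hi]
      simp only [Sum.elim_inl, Sum.elim_inr, Polynomial.eval_pow, Polynomial.eval_X]
      rw [node_term hq hy e he, add_tsub_cancel_left]
    · refine Finset.sum_congr rfl fun i hi => ?_
      have hE : ((range (N + 1)).disjSum (range (N + 1))).erase (Sum.inr i) =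
          (range (N + 1)).disjSum ((range (N + 1)).erase i) := by
        ext (a | a) <;> simp
      have hcard : ((range (N + 1)).erase i).card = N := by
        rw [Finset.card_erase_of_mem hi, Finset.card_range]; rfl
      rw [hE, Finset.prod_disjSum]
      simp only [Sum.elim_inl, Sum.elim_inr, Polynomial.eval_pow, Polynomial.eval_X]
      have p1 : ∏ j ∈ range (N + 1), (y * q ^ i - q ^ j) = 
          y ^ (N + 1) * ∏ j ∈ range (N + 1), (q ^ i - y⁻¹ * q ^ j) := by
        have : y ^ (N + 1) = ∏ j ∈ range (N + 1), y := by simp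
        rw [this, ← Finset.prod_mul_distrib]
        refine Finset.prod_congr rfl fun j _ => ?_
        field_simp
      have p2 : ∏ j ∈ (range (N + 1)).erase i, (y * q ^ i - y * q ^ j) = 
          y ^ N * ∏ j ∈ (range (N + 1)).erase i, (q ^ i - q ^ j) := by
        have : y ^ N = ∏ j ∈ (range (N + 1)).erase i, y := by
          rw [Finset.prod_const, hcard]
        rw [this, ← Finset.prod_mul_distrib]
        refine Finset.prod_congr rfl fun j _ => ?_
        ring
      have p3 : y ^ (2 * N + 1 - e) = y ^ (-(e : ℤ)) * (y ^ (N + 1) * y ^ N) := by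
        have : y ^ (N + 1) * y ^ N = y ^ (2 * N + 1 - e) * y ^ e := by
          rw [← pow_add, ← pow_add]; congr 1; omega
        rw [this, zpow_neg, zpow_natCast]
        field_simp
      rw [p1, p2, mul_pow, p3]
      obtain ⟨m, rfl⟩ : ∃ m, N = i + m := ⟨N - i, by have := Finset.mem_range.1 hi; omega⟩
      have := node_term hq (inv_ne_zero hy) e he i m
      rw [fN, if_pos hi, add_tsub_cancel_left, ← this]
      have hB : y ^ (i + m + 1) * y ^ (i + m) ≠ 0 := by positivity
      rw [show ∀ A B : ℂ, y ^ (i + m + 1) * A * (y ^ (i + m) * B) =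
        (y ^ (i + m + 1) * y ^ (i + m)) * (B * A) by intros; ring,
        show ∀ A B C : ℂ, A * C * B = C * (A * B) by intros; ring, mul_div_mul_left _ _ hB,
        mul_div_assoc]
  · rintro (i | i) - (j | j) - h
    · simp only [Sum.elim_inl] at h; rw [hinj _ _ h]
    · exact absurd h (hne _ _)
    · exact absurd h.symm (hne _ _)
    · simp only [Sum.elim_inr] at h; rw [hinj _ _ (mul_left_cancel₀ hy h)]
  · rw [Finset.card_disjSum, Finset.card_range, Polynomial.degree_X_pow]
    norm_cast
    omega

/-- Residue sums. -/
noncomputable def Vs (c q : ℂ) (n : ℤ) : ℂ := ∑' k : ℕ, alc c q k * q ^ ((k : ℤ) * n)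

lemma one_sub_shift {q : ℂ} (hq : q ≠ 0) {c : ℂ} (hc : ∀ n : ℤ, c ≠ q ^ n) (m : ℤ) :
    1 - c * q ^ m ≠ 0 := by
  intro h
  apply hc (-m)
  rw [zpow_neg]
  exact eq_inv_of_mul_eq_one_left (sub_eq_zero.1 h).symm

lemma one_sub_c {q : ℂ} (hq : q ≠ 0) {c : ℂ} (hc : ∀ n : ℤ, c ≠ q ^ n) (j : ℕ) :
    1 - c * q ^ j ≠ 0 := by
  simpa using one_sub_shift hq hc j

lemma one_sub_qc {q : ℂ} (hq : q ≠ 0) {c : ℂ} (hc : ∀ n : ℤ, c ≠ q ^ n) (j : ℕ) :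
    1 - q * c * q ^ j ≠ 0 := by
  have := one_sub_c hq hc (j + 1)
  rwa [pow_succ', ← mul_assoc, mul_comm c q] at this

lemma inv_ne_qpow {q : ℂ} {c : ℂ} (hc : ∀ n : ℤ, c ≠ q ^ n) (n : ℤ) : c⁻¹ ≠ q ^ n := by
  intro h
  apply hc (-n)
  rw [zpow_neg, ← h, inv_inv]

lemma Vs_summable {q : ℂ} (hq0 : 0 < ‖q‖) (hq1 : ‖q‖ < 1) {c : ℂ} (hc0 : c ≠ 0)
    (hc : ∀ n : ℤ, c ≠ q ^ n) (n : ℤ) :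
    Summable fun k : ℕ => ‖alc c q k * q ^ ((k : ℤ) * n)‖ := by
  have hq : q ≠ 0 := norm_pos_iff.1 hq0
  obtain ⟨C1, hC1, h1⟩ := qPoch_inv_bdd hq1 (one_sub_qq hq1)
  obtain ⟨C2, hC2, h2⟩ := qPoch_inv_bdd hq1 (one_sub_qc hq hc)
  have hB : 0 < ‖c‖ * ‖q‖ ^ n := by
    have := norm_pos_iff.2 hc0
    positivity
  refine Summable.of_nonneg_of_le (fun _ => norm_nonneg _) (fun k => ?_)
    ((summable_gauss hq0 hq1 _ hB).mul_left (C1 * C2))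
  have : alc c q k * q ^ ((k : ℤ) * n) = ((qPoch q q k)⁻¹ * (qPoch (q * c) q k)⁻¹) *
      (q ^ (k * (k + 1)) * (c * q ^ n) ^ k) := by
    rw [alc, mul_comm (k : ℤ) n, zpow_mul, zpow_natCast, div_eq_mul_inv, mul_inv]; ring
  rw [this, norm_mul, norm_mul, norm_mul (q ^ _), norm_pow, norm_pow, norm_mul c, norm_zpow]
  gcongr ?_ * ?_ * (?_ * _)
  · exact h1 _
  · exact h2 _
  · exact pow_le_pow_of_le_one hq0.le hq1.le (Nat.div_le_self _ _)

lemma fN_lim {q : ℂ} (hq0 : 0 < ‖q‖) (hq1 : ‖q‖ < 1) {y : ℂ} (hy : y ≠ 0)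
    (hyq : ∀ n : ℤ, y ≠ q ^ n) (e : ℕ) :
    Tendsto (fun N => ∑' i, fN q y e N i) atTop
      (𝓝 (Vs y⁻¹ q (-(e : ℤ)) * ((qPochInf q q)⁻¹ * (qPochInf y q)⁻¹))) := by
  have hq : q ≠ 0 := norm_pos_iff.1 hq0
  obtain ⟨C1, hC1, h1⟩ := qPoch_inv_bdd hq1 (one_sub_qq hq1)
  obtain ⟨C2, hC2, h2⟩ := qPoch_inv_bdd hq1 (one_sub_c hq hyq)
  rw [Vs, ← tsum_mul_right]
  refine tendsto_tsum_of_dominated_convergence 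
    ((Vs_summable hq0 hq1 (inv_ne_zero hy) (inv_ne_qpow hyq) (-(e : ℤ))).mul_right (C1 * C2)) ?_ ?_
  · intro i
    have ht : Tendsto (fun N : ℕ => N - i) atTop atTop := tendsto_sub_atTop_nat i
    have ha := ((qPoch_tendsto hq1 q).inv₀ (qPochInf_ne_zero hq1 (one_sub_qq hq1))).comp ht
    have hb := (((qPoch_tendsto hq1 y).inv₀ (qPochInf_ne_zero hq1 (one_sub_c hq hyq))).comp
      (tendsto_add_atTop_nat 1)).comp ht
    refine ((ha.mul hb).const_mul (alc y⁻¹ q i * q ^ ((i : ℤ) * (-(e : ℤ))))).congr' ?_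
    filter_upwards [eventually_ge_atTop i] with N hN
    rw [fN, if_pos (Finset.mem_range.2 (by omega))]
    rfl
  · refine Eventually.of_forall fun N i => ?_
    unfold fN
    split_ifs
    · rw [norm_mul, norm_mul (_)⁻¹]
      gcongr
      · exact h1 _
      · exact h2 _
    · rw [norm_zero]; positivity

/-- The sum of the two residue sums. -/
noncomputable def Rs (y q : ℂ) (n : ℤ) : ℂ :=
  Vs y⁻¹ q n * (qPochInf y q)⁻¹ + y ^ n * (Vs y q n * (qPochInf y⁻¹ q)⁻¹)

lemma Rs_init {q : ℂ} (hq0 : 0 < ‖q‖) (hq1 : ‖q‖ < 1) {y : ℂ} (hy : y ≠ 0)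
    (hyq : ∀ n : ℤ, y ≠ q ^ n) (e : ℕ) (he : e ≤ 1) :
    Rs y q (-(e : ℤ)) = if e = 0 then qPochInf q q else 0 := by
  have hne := qPochInf_ne_zero hq1 (one_sub_qq hq1)
  have h1 := fN_lim hq0 hq1 hy hyq e
  have h2 := (fN_lim hq0 hq1 (inv_ne_zero hy) (inv_ne_qpow hyq) e).const_mul (y ^ (-(e : ℤ)))
  have h3 := tendsto_nhds_unique ((h1.add h2).congr fun N => finite_pf hq0 hq1 hy hyq e he N)
    tendsto_const_nhds
  rw [inv_inv] at h3
  have h4 : Rs y q (-(e : ℤ)) = qPochInf q q * (if e = 0 then 1 else 0) := by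
    rw [← h3, Rs]
    field_simp
  rw [h4]; split_ifs <;> simp

lemma alc_rec {q : ℂ} (hq0 : 0 < ‖q‖) (hq1 : ‖q‖ < 1) {c : ℂ} (hc0 : c ≠ 0)
    (hc : ∀ n : ℤ, c ≠ q ^ n) (k : ℕ) :
    alc c q (k + 1) * ((1 - (q ^ (k + 1))⁻¹) * (1 - c⁻¹ * (q ^ (k + 1))⁻¹)) = alc c q k := by
  have hq : q ≠ 0 := norm_pos_iff.1 hq0
  unfold alc
  rw [qPoch_succ, qPoch_succ]
  have h1 := one_sub_qq hq1 k
  have h2 := one_sub_qc hq hc k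
  have h3 := qPoch_ne_zero (one_sub_qq hq1) k
  have h4 := qPoch_ne_zero (one_sub_qc hq hc) k
  have e1 : (1 - (q ^ (k + 1))⁻¹) * (1 - c⁻¹ * (q ^ (k + 1))⁻¹) =
      (1 - q * q ^ k) * (1 - q * c * q ^ k) / (c * q ^ (k + 1) * q ^ (k + 1)) := by
    field_simp
    ring
  have e2 : q ^ ((k + 1) * (k + 1 + 1)) = q ^ (k * (k + 1)) * (q ^ (k + 1) * q ^ (k + 1)) := by ring
  rw [e1, e2, pow_succ c]
  generalize q ^ (k * (k + 1)) = A
  have h5 : q ^ (k + 1) ≠ 0 := pow_ne_zero _ hq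
  generalize q ^ (k + 1) = B at *
  generalize 1 - q * q ^ k = E at *
  generalize 1 - q * c * q ^ k = G at *
  field_simp

lemma Vs_rec {q : ℂ} (hq0 : 0 < ‖q‖) (hq1 : ‖q‖ < 1) {c : ℂ} (hc0 : c ≠ 0)
    (hc : ∀ n : ℤ, c ≠ q ^ n) (n : ℤ) :
    (1 - q ^ n) * Vs c q n = (1 + c⁻¹) * Vs c q (n - 1) - c⁻¹ * Vs c q (n - 2) := by
  have hq : q ≠ 0 := norm_pos_iff.1 hq0
  have s0 := (Vs_summable hq0 hq1 hc0 hc n).of_norm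
  have s1 := (Vs_summable hq0 hq1 hc0 hc (n - 1)).of_norm
  have s2 := (Vs_summable hq0 hq1 hc0 hc (n - 2)).of_norm
  have hs := (s0.sub (s1.mul_left (1 + c⁻¹))).add (s2.mul_left c⁻¹)
  have key : Vs c q n - (1 + c⁻¹) * Vs c q (n - 1) + c⁻¹ * Vs c q (n - 2) = q ^ n * Vs c q n := by
    have e := ((s0.hasSum.sub (s1.hasSum.mul_left (1 + c⁻¹))).add (s2.hasSum.mul_left c⁻¹)).tsum_eq
    unfold Vs
    rw [← e, hs.tsum_eq_zero_add, ← tsum_mul_left]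
    have z : ∀ m : ℤ, ((0 : ℕ) : ℤ) * m = 0 := by simp
    simp only [z, zpow_zero]
    rw [show ∀ A : ℂ, A * 1 - (1 + c⁻¹) * (A * 1) + c⁻¹ * (A * 1) = 0 by intro A; ring, zero_add]
    refine tsum_congr fun k => ?_
    rw [← alc_rec hq0 hq1 hc0 hc k]
    have z1 : q ^ (((k + 1 : ℕ) : ℤ) * (n - 1)) = q ^ (((k + 1 : ℕ) : ℤ) * n) * (q ^ (k + 1))⁻¹ := by
      rw [mul_sub, zpow_sub₀ hq, mul_one, zpow_natCast, div_eq_mul_inv]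
    have z2 : q ^ (((k + 1 : ℕ) : ℤ) * (n - 2)) =
        q ^ (((k + 1 : ℕ) : ℤ) * n) * (q ^ (k + 1))⁻¹ * (q ^ (k + 1))⁻¹ := by
      rw [mul_sub, zpow_sub₀ hq, mul_two, zpow_add₀ hq, zpow_natCast, div_eq_mul_inv, mul_inv,
        mul_assoc]
    have z3 : q ^ (((k + 1 : ℕ) : ℤ) * n) = q ^ ((k : ℤ) * n) * q ^ n := by
      rw [← zpow_add₀ hq]; congr 1; push_cast; ring
    rw [z1, z2, z3]
    ring
  linear_combination key

lemma Rs_rec {q : ℂ} (hq0 : 0 < ‖q‖) (hq1 : ‖q‖ < 1) {y : ℂ} (hy : y ≠ 0)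
    (hyq : ∀ n : ℤ, y ≠ q ^ n) (n : ℤ) :
    (1 - q ^ n) * Rs y q n = (1 + y) * Rs y q (n - 1) - y * Rs y q (n - 2) := by
  have h1 := Vs_rec hq0 hq1 hy hyq n
  have h2 := Vs_rec hq0 hq1 (inv_ne_zero hy) (inv_ne_qpow hyq) n
  rw [inv_inv] at h2
  unfold Rs
  have z1 : y ^ n = y ^ (n - 2) * y * y := by
    rw [← zpow_add_one₀ hy, ← zpow_add_one₀ hy]; congr 1; ring
  have z2 : y ^ (n - 1) = y ^ (n - 2) * y := by
    rw [← zpow_add_one₀ hy]; congr 1; ring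
  rw [z1, z2]
  have e1 : y * y⁻¹ = 1 := mul_inv_cancel₀ hy
  linear_combination (qPochInf y q)⁻¹ * h2 + y ^ (n - 2) * y * y * (qPochInf y⁻¹ q)⁻¹ * h1 +
    (y ^ (n - 2) * y * (qPochInf y⁻¹ q)⁻¹ * (Vs y q (n - 1) - Vs y q (n - 2))) * e1

/-- Rogers-Szegő type polynomials. -/
noncomputable def Hs (y q : ℂ) (n : ℤ) : ℂ := ∑' l : ℤ, y ^ l * ipq q l * ipq q (n - l)

lemma Hs_summable (y q : ℂ) (n : ℤ) : Summable fun l : ℤ => y ^ l * ipq q l * ipq q (n - l) := by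
  apply summable_of_ne_finset_zero (s := Finset.Icc 0 n)
  intro l hl
  rw [Finset.mem_Icc, not_and_or] at hl
  rcases hl with h | h
  · rw [ipq_neg q (show l < 0 by omega)]; simp
  · rw [ipq_neg q (show n - l < 0 by omega)]; simp

lemma Hs_rec {q : ℂ} (hq0 : 0 < ‖q‖) (hq1 : ‖q‖ < 1) {y : ℂ} (hy : y ≠ 0) (n : ℤ) :
    (1 - q ^ n) * Hs y q n = (1 + y) * Hs y q (n - 1) - y * Hs y q (n - 2) := by
  have hq : q ≠ 0 := norm_pos_iff.1 hq0
  have s0 := (Hs_summable y q n).hasSum.mul_left (1 - q ^ n)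
  have s1 := (Hs_summable y q (n - 1)).hasSum
  have s1' := ((Equiv.subRight (1 : ℤ)).hasSum_iff.2 s1).mul_left y
  have s2' := ((Equiv.subRight (1 : ℤ)).hasSum_iff.2 (Hs_summable y q (n - 2)).hasSum).mul_left y
  have h := hasSum_of_eq ((s1.add s1').sub s2') (g := fun l : ℤ => (1 - q ^ n) *
    (y ^ l * ipq q l * ipq q (n - l))) (fun l => ?_) rfl
  · have := s0.unique h
    change (1 - q ^ n) * Hs y q n = Hs y q (n - 1) + y * Hs y q (n - 1) - y * Hs y q (n - 2) at this
    rw [this]; ring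
  · simp only [Function.comp, Equiv.subRight_apply]
    rw [show n - 1 - (l - 1) = n - l by ring, show n - 2 - (l - 1) = n - l - 1 by ring,
      show n - 1 - l = n - l - 1 by ring, ipq_rec hq1 (n - l), ipq_rec hq1 l, zpow_sub₀ hq,
      zpow_sub₀ hy]
    have := zpow_ne_zero l hq
    field_simp
    ring

lemma Hs_neg (y q : ℂ) {n : ℤ} (hn : n < 0) : Hs y q n = 0 := by
  unfold Hs
  convert tsum_zero with l
  rcases lt_or_ge l 0 with h | h
  · rw [ipq_neg q h]; simp
  · rw [ipq_neg q (show n - l < 0 by omega)]; simp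

lemma Hs_nat (y q : ℂ) (n : ℕ) :
    Hs y q n = ∑ l ∈ range (n + 1), y ^ l / (qPoch q q l * qPoch q q (n - l)) := by
  unfold Hs
  rw [← (Nat.cast_injective (R := ℤ)).tsum_eq, tsum_eq_sum (s := range (n + 1))]
  · refine Finset.sum_congr rfl fun l hl => ?_
    have hl' : l ≤ n := by have := Finset.mem_range.1 hl; omega
    rw [← Nat.cast_sub hl', ipq_nat, ipq_nat, zpow_natCast, div_eq_mul_inv, mul_inv, mul_assoc]
  · intro l hl
    have hl' : n < l := by have := mt Finset.mem_range.2 hl; omega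
    rw [ipq_neg q (show (n : ℤ) - l < 0 by omega), mul_zero]
  · intro l hl
    by_contra h
    apply hl
    have : l < 0 := by
      by_contra h0
      exact h ⟨l.toNat, by omega⟩
    simp [ipq_neg q this]

lemma Rs_eq_Hs {q : ℂ} (hq0 : 0 < ‖q‖) (hq1 : ‖q‖ < 1) {y : ℂ} (hy : y ≠ 0)
    (hyq : ∀ n : ℤ, y ≠ q ^ n) (n : ℤ) : Rs y q n = qPochInf q q * Hs y q n := by
  have h0 : Rs y q 0 = qPochInf q q * Hs y q 0 := by
    have := Rs_init hq0 hq1 hy hyq 0 (by norm_num)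
    simp only [Nat.cast_zero, neg_zero, if_true] at this
    have h2 := Hs_nat y q 0
    simp only [Nat.cast_zero] at h2
    rw [this, h2]; simp [qPoch_zero]
  have h1 : Rs y q (-1) = qPochInf q q * Hs y q (-1) := by
    have := Rs_init hq0 hq1 hy hyq 1 le_rfl
    simp only [Nat.cast_one, one_ne_zero, if_false] at this
    rw [this, Hs_neg y q (by norm_num)]; simp
  have hR := Rs_rec hq0 hq1 hy hyq
  have hH := Hs_rec hq0 hq1 hy
  have up : ∀ m : ℕ, Rs y q ((m : ℤ) - 1) = qPochInf q q * Hs y q ((m : ℤ) - 1) ∧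
      Rs y q m = qPochInf q q * Hs y q m := by
    intro m
    induction m with
    | zero => simpa using ⟨h1, h0⟩
    | succ m ih =>
      push_cast
      rw [add_sub_cancel_right]
      refine ⟨ih.2, ?_⟩
      have a := hR (m + 1)
      have b := hH (m + 1)
      rw [add_sub_cancel_right, show (m : ℤ) + 1 - 2 = m - 1 by ring] at a b
      apply mul_left_cancel₀ (one_sub_zpow hq0 hq1 ((m : ℤ) + 1) (by omega))
      linear_combination a - qPochInf q q * b + (1 + y) * ih.2 - y * ih.1
  have dn : ∀ m : ℕ, Rs y q (-(m : ℤ)) = qPochInf q q * Hs y q (-(m : ℤ)) ∧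
      Rs y q (-(m : ℤ) - 1) = qPochInf q q * Hs y q (-(m : ℤ) - 1) := by
    intro m
    induction m with
    | zero => simpa using ⟨h0, h1⟩
    | succ m ih =>
      push_cast
      rw [show -((m : ℤ) + 1) = -m - 1 by ring]
      refine ⟨ih.2, ?_⟩
      have a := hR (-m)
      have b := hH (-m)
      rw [show -(m : ℤ) - 2 = -m - 1 - 1 by ring] at a b
      apply mul_left_cancel₀ hy
      linear_combination a - qPochInf q q * b + (1 + y) * ih.2 - (1 - q ^ (-(m : ℤ))) * ih.1
  rcases le_total 0 n with h | h
  · obtain ⟨m, rfl⟩ := Int.eq_ofNat_of_zero_le h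
    exact (up m).2
  · obtain ⟨m, hm⟩ := Int.eq_ofNat_of_zero_le (neg_nonneg.2 h)
    have := (dn m).1
    rwa [← hm, neg_neg] at this

lemma conv_lemma {q : ℂ} (hq0 : 0 < ‖q‖) (hq1 : ‖q‖ < 1) {x : ℂ} (hx : x ≠ 0)
    (hx2 : ∀ n : ℤ, x ^ 2 ≠ q ^ n) {t : ℂ} (ht : t ≠ 0) :
    HasSum (fun n : ℤ => (-1 : ℂ) ^ n * q ^ (n * (n + 1) / 2) * (t * x) ^ n * Vs (x ^ 2) q n)
    (jtheta (t * x) q * ∑' k : ℕ, (-1 : ℂ) ^ k * q ^ (k * (k + 1) / 2) * x ^ k * t ^ (-(k : ℤ)) /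
      (qPoch q q k * qPoch (q * x ^ 2) q k)) := by
  have hq : q ≠ 0 := norm_pos_iff.1 hq0
  have htx : t * x ≠ 0 := mul_ne_zero ht hx
  have s1 := summable_theta hq0 hq1 htx
  have s2 : Summable fun k : ℕ => ‖(-1 : ℂ) ^ k * q ^ (k * (k + 1) / 2) * x ^ k * t ^ (-(k : ℤ)) /
      (qPoch q q k * qPoch (q * x ^ 2) q k)‖ := by
    obtain ⟨C1, hC1, h1⟩ := qPoch_inv_bdd hq1 (one_sub_qq hq1)
    obtain ⟨C2, hC2, h2⟩ := qPoch_inv_bdd hq1 (one_sub_qc hq hx2)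
    have hB : 0 < ‖x * t⁻¹‖ := norm_pos_iff.2 (mul_ne_zero hx (inv_ne_zero ht))
    refine Summable.of_nonneg_of_le (fun _ => norm_nonneg _) (fun k => ?_)
      ((summable_gauss hq0 hq1 _ hB).mul_left (C1 * C2))
    have : (-1 : ℂ) ^ k * q ^ (k * (k + 1) / 2) * x ^ k * t ^ (-(k : ℤ)) /
        (qPoch q q k * qPoch (q * x ^ 2) q k) = ((qPoch q q k)⁻¹ * (qPoch (q * x ^ 2) q k)⁻¹) *
        ((-1 : ℂ) ^ k * (q ^ (k * (k + 1) / 2) * (x * t⁻¹) ^ k)) := by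
      rw [zpow_neg, zpow_natCast, div_eq_mul_inv, mul_inv, mul_pow, inv_pow]; ring
    rw [this, norm_mul, norm_mul, norm_mul ((-1) ^ k), norm_mul (q ^ _), norm_pow (-1 : ℂ), norm_neg,
      norm_one, one_pow, one_mul, norm_pow, norm_pow]
    gcongr ?_ * ?_ * (_ * _)
    · exact h1 _
    · exact h2 _
  have hprod := summable_mul_of_summable_norm s1 s2
  have htot := hprod.hasSum
  rw [← tsum_mul_tsum_of_summable_norm s1 s2] at htot
  let E : ℤ × ℕ ≃ ℤ × ℕ :=
    { toFun := fun p => (p.1 + p.2, p.2)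
      invFun := fun p => (p.1 - p.2, p.2)
      left_inv := fun p => by simp
      right_inv := fun p => by simp }
  have h3 := E.hasSum_iff.2 htot
  refine h3.prod_fiberwise fun n => ?_
  have h4 := (Vs_summable hq0 hq1 (pow_ne_zero 2 hx) hx2 n).of_norm.hasSum.mul_left
    ((-1 : ℂ) ^ n * q ^ (n * (n + 1) / 2) * (t * x) ^ n)
  refine hasSum_of_eq h4 (fun k => ?_) rfl
  simp only [Function.comp, E, Equiv.coe_fn_mk]
  rw [tri_add, zpow_add₀ hq, zpow_add₀ hq, zpow_add₀ htx, zpow_add₀ (by norm_num : (-1 : ℂ) ≠ 0),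
    qpow_tri, mul_comm n (k : ℤ), alc, zpow_neg]
  simp only [zpow_natCast]
  have e1 : q ^ (k * (k + 1)) = q ^ (k * (k + 1) / 2) * q ^ (k * (k + 1) / 2) := by
    rw [← pow_add]; congr 1
    have := (Nat.even_mul_succ_self k).two_dvd
    omega
  have e2 : ((-1 : ℂ) ^ k) * (-1) ^ k = 1 := by rw [← mul_pow]; simp
  have e3 : t ^ k * (t ^ k)⁻¹ = 1 := mul_inv_cancel₀ (pow_ne_zero _ ht)
  rw [e1, mul_pow t x k]
  simp only [div_eq_mul_inv]
  generalize q ^ (k * (k + 1) / 2) = Q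
  generalize (qPoch q q k * qPoch (q * x ^ 2) q k)⁻¹ = D
  generalize (-1 : ℂ) ^ k = s at *
  generalize (t ^ k)⁻¹ = T at *
  rw [← pow_mul, mul_comm 2 k, pow_mul]
  linear_combination ((-1 : ℂ) ^ n * q ^ (n * (n + 1) / 2) * (t * x) ^ n * Q * Q * (x ^ k) ^ 2 * D *
    q ^ ((k : ℤ) * n)) * (s * s * e3 + e2)

lemma main_series {q : ℂ} (hq0 : 0 < ‖q‖) (hq1 : ‖q‖ < 1) {x : ℂ} (hx : x ≠ 0)
    (hx2 : ∀ n : ℤ, x ^ 2 ≠ q ^ n) {t : ℂ} (ht : t ≠ 0) :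
    (∑' k : ℕ, ∑ l ∈ Finset.range (k + 1),
      (-1 : ℂ) ^ k * q ^ (k * (k + 1) / 2) * x ^ (2 * (l : ℤ) - k) * t ^ k /
        (qPoch q q l * qPoch q q (k - l))) =
    (qPochInf q q)⁻¹ * ((qPochInf (x ^ 2)⁻¹ q)⁻¹ * (jtheta (t * x) q *
      ∑' k : ℕ, (-1 : ℂ) ^ k * q ^ (k * (k + 1) / 2) * x ^ k * t ^ (-(k : ℤ)) /
      (qPoch q q k * qPoch (q * x ^ 2) q k)) + 
      (qPochInf (x ^ 2) q)⁻¹ * (jtheta (t * x⁻¹) q *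
      ∑' k : ℕ, (-1 : ℂ) ^ k * q ^ (k * (k + 1) / 2) * x⁻¹ ^ k * t ^ (-(k : ℤ)) /
      (qPoch q q k * qPoch (q * x⁻¹ ^ 2) q k))) := by
  have hne := qPochInf_ne_zero hq1 (one_sub_qq hq1)
  have hx2' : ∀ n : ℤ, x⁻¹ ^ 2 ≠ q ^ n := by
    rw [inv_pow]; exact inv_ne_qpow hx2
  have h1 := conv_lemma hq0 hq1 hx hx2 ht
  have h2 := conv_lemma hq0 hq1 (inv_ne_zero hx) hx2' ht
  have h3 := ((h1.mul_left (qPochInf (x ^ 2)⁻¹ q)⁻¹).add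
    (h2.mul_left (qPochInf (x ^ 2) q)⁻¹)).mul_left (qPochInf q q)⁻¹
  have h4 := hasSum_of_eq h3 (g := fun n : ℤ => (-1 : ℂ) ^ n * q ^ (n * (n + 1) / 2) *
    (t * x⁻¹) ^ n * Hs (x ^ 2) q n) (fun n => ?_) rfl
  · rw [← h4.tsum_eq, ← (Nat.cast_injective (R := ℤ)).tsum_eq]
    · refine tsum_congr fun k => ?_
      rw [Hs_nat, Finset.mul_sum]
      refine Finset.sum_congr rfl fun l _ => ?_
      rw [qpow_tri, zpow_sub₀ hx, zpow_mul]
      simp only [zpow_natCast, mul_pow, inv_pow, zpow_ofNat]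
      ring
    · intro l hl
      by_contra h
      apply hl
      have : l < 0 := by
        by_contra h0
        exact h ⟨l.toNat, by omega⟩
      simp [Hs_neg _ q this]
  · have h5 := Rs_eq_Hs hq0 hq1 (pow_ne_zero 2 hx) hx2 n
    have h6 : Hs (x ^ 2) q n = (qPochInf q q)⁻¹ * Rs (x ^ 2) q n := by
      rw [h5]; field_simp
    have h7 : (t * x) ^ n = (t * x⁻¹) ^ n * (x ^ 2) ^ n := by
      rw [← mul_zpow]; congr 1; field_simp
    rw [h6, Rs, h7, inv_pow]
    ring

lemma gx_rewrite {q : ℂ} (hq0 : 0 < ‖q‖) (hq1 : ‖q‖ < 1) {x : ℂ} (hx : x ≠ 0)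
    (hx2 : ∀ n : ℤ, x ^ 2 ≠ q ^ n) {t : ℂ} (ht : t ≠ 0) :
    gxinv t x q = -x * jtheta x q / (1 - x) * (jtheta t q)⁻¹ * t⁻¹ * (qPochInf q q)⁻¹ *
      ((qPochInf q q)⁻¹ * ((qPochInf (x ^ 2)⁻¹ q)⁻¹ * (jtheta (t * x) q *
      ∑' k : ℕ, (-1 : ℂ) ^ k * q ^ (k * (k + 1) / 2) * x ^ k * t ^ (-(k : ℤ)) /
      (qPoch q q k * qPoch (q * x ^ 2) q k)))) := by
  have hq : q ≠ 0 := norm_pos_iff.1 hq0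
  have h1 := qPochInf_ne_zero hq1 (one_sub_qc hq hx2)
  have hs : ∀ k : ℕ, (-1 : ℂ) ^ k * q ^ (k * (k + 1) / 2) * x ^ k * t ^ (-(k : ℤ) - 1) /
      (qPoch q q k * qPoch (q * x ^ 2) q k) = t⁻¹ * ((-1 : ℂ) ^ k * q ^ (k * (k + 1) / 2) * x ^ k *
        t ^ (-(k : ℤ)) / (qPoch q q k * qPoch (q * x ^ 2) q k)) := by
    intro k
    rw [zpow_sub_one₀ ht]; ring
  rw [gxinv, tsum_congr hs, tsum_mul_left, jtheta_shift q hq x hx, jtp hq0 hq1 (pow_ne_zero 2 hx)]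
  generalize (∑' k : ℕ, (-1 : ℂ) ^ k * q ^ (k * (k + 1) / 2) * x ^ k *
        t ^ (-(k : ℤ)) / (qPoch q q k * qPoch (q * x ^ 2) q k)) = S
  simp only [div_eq_mul_inv, mul_inv]
  have : qPochInf (q * x ^ 2) q * (qPochInf (q * x ^ 2) q)⁻¹ = 1 := mul_inv_cancel₀ h1
  linear_combination (-x * jtheta x q * jtheta (t * x) q * (jtheta t q)⁻¹ * (qPochInf q q)⁻¹ *
    (qPochInf (x ^ 2)⁻¹ q)⁻¹ * (1 - x)⁻¹ * (qPochInf q q)⁻¹ * t⁻¹ * S) * this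

/-- `f^{(−1)}(t,x,q) = − g^{(0,x^{−1})}(t,x,q) − g^{(0,x)}(t,x,q)`. -/
theorem fneg1_eq_neg_gx_sum
    (q : ℂ) (hq0 : 0 < ‖q‖) (hq1 : ‖q‖ < 1)
    (x : ℂ) (hx : x ≠ 0) (hx2 : ∀ n : ℤ, x ^ 2 ≠ q ^ n)
    (t : ℂ) (ht : t ≠ 0) (htq : ∀ n : ℤ, t ≠ q ^ n) :
    fneg1 t x q = -gxinv t x q - gxinv t x⁻¹ q := by
  have hq : q ≠ 0 := norm_pos_iff.1 hq0
  have hx2' : ∀ n : ℤ, x⁻¹ ^ 2 ≠ q ^ n := by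
    rw [inv_pow]; exact inv_ne_qpow hx2
  have hx1 : 1 - x ≠ 0 := by
    intro h
    apply hx2 0
    rw [← sub_eq_zero.1 h]; simp
  have hx1' : 1 - x⁻¹ ≠ 0 := by
    intro h
    apply hx2' 0
    rw [← sub_eq_zero.1 h]; simp
  have hp : -x⁻¹ * jtheta x⁻¹ q / (1 - x⁻¹) = -x * jtheta x q / (1 - x) := by
    rw [jtheta_inv q x hx, div_eq_div_iff hx1' hx1]
    field_simp
    ring
  rw [gx_rewrite hq0 hq1 hx hx2 ht, gx_rewrite hq0 hq1 (inv_ne_zero hx) hx2' ht, hp, fneg1,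
    main_series hq0 hq1 hx hx2 ht, jtheta_shift q hq x hx, jtheta_shift q hq t ht, inv_pow, inv_inv]
  simp only [div_eq_mul_inv, mul_inv, inv_neg]
  ring
end

section
/- Let q ∈ ℂ with 0 < |q| < 1, let x ∈ ℂ∖{0} with x ∉ q^ℤ, and let h be a holomorphic function on ℂ∖{0} satisfying tq^{−1}·h(q^{−1}t) + (1 − (x + x^{−1})t)·h(t) + tq·h(qt) = 0 for every t ≠ 0. Then h vanishes identically on ℂ∖{0}. -/
open MeasureTheory in
/-- The integral over a circle of an integrand depending on `w * e^{iθ}` does not depend on `w`. -/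
lemma aux_avg_const (f : ℂ → ℂ) (hf : ∀ t : ℂ, t ≠ 0 → DifferentiableAt ℂ f t) (w : ℂ) (hw : w ≠ 0) :
    ∫ θ in (0:ℝ)..2 * Real.pi, f (w * Complex.exp (θ * Complex.I)) =
      ∫ θ in (0:ℝ)..2 * Real.pi, f (Complex.exp (θ * Complex.I)) := by
  have key : ∀ R : ℝ, 0 < R → (∮ z in C(0, R), (z - 0)⁻¹ • f z) =
      Complex.I * ∫ θ in (0:ℝ)..2 * Real.pi, f (R * Complex.exp (θ * Complex.I)) := by
    intro R hR
    rw [circleIntegral, ← intervalIntegral.integral_const_mul]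
    apply intervalIntegral.integral_congr
    intro θ _
    have hR' : (R : ℂ) ≠ 0 := by exact_mod_cast hR.ne'
    have := Complex.exp_ne_zero (θ * Complex.I)
    simp only [deriv_circleMap, circleMap, zero_add, sub_zero, smul_eq_mul]
    field_simp
  have ind : ∀ r R : ℝ, 0 < r → r ≤ R → (∮ z in C(0, R), (z - 0)⁻¹ • f z) =
      ∮ z in C(0, r), (z - 0)⁻¹ • f z := by
    intro r R hr hrR
    refine Complex.circleIntegral_sub_center_inv_smul_eq_of_differentiable_on_annulus_off_countable
      hr hrR Set.countable_empty ?_ ?_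
    · intro z hz
      refine (hf z ?_).continuousAt.continuousWithinAt
      rintro rfl
      exact hz.2 (by simp [hr])
    · intro z hz
      refine hf z ?_
      rintro rfl
      exact hz.1.2 (by simp [hr.le])
  have ind1 : ∀ R : ℝ, 0 < R → (∮ z in C(0, R), (z - 0)⁻¹ • f z) =
      ∮ z in C(0, 1), (z - 0)⁻¹ • f z := by
    intro R hR
    rcases le_total R 1 with h | h
    · exact (ind R 1 hR h).symm
    · exact ind 1 R one_pos h
  have hn : 0 < ‖w‖ := norm_pos_iff.2 hw
  have h1 := ind1 ‖w‖ hn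
  rw [key _ hn, key 1 one_pos] at h1
  have h2 := mul_left_cancel₀ Complex.I_ne_zero h1
  simp only [Complex.ofReal_one, one_mul] at h2
  rw [← h2]
  have hper : Function.Periodic (fun θ : ℝ => f (‖w‖ * Complex.exp (θ * Complex.I))) (2 * Real.pi) := by
    intro θ
    have : Complex.exp (((θ + 2 * Real.pi : ℝ) : ℂ) * Complex.I) = Complex.exp (θ * Complex.I) := by
      push_cast
      rw [add_mul, Complex.exp_add, Complex.exp_two_pi_mul_I, mul_one]
    simp only [this]
  have h3 := hper.intervalIntegral_add_eq w.arg 0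
  rw [zero_add] at h3
  rw [← h3]
  have h4 := intervalIntegral.integral_comp_add_right (a := 0) (b := 2 * Real.pi)
    (fun θ : ℝ => f (‖w‖ * Complex.exp (θ * Complex.I))) w.arg
  rw [zero_add, add_comm (2 * Real.pi)] at h4
  rw [← h4]
  apply intervalIntegral.integral_congr
  intro θ _
  simp only
  congr 1
  conv_lhs => rw [← Complex.norm_mul_exp_arg_mul_I w]
  push_cast
  rw [add_mul, Complex.exp_add]
  ring

/-- A continuous function on the circle whose Fourier integrals vanish is zero. -/
lemma aux_fourier (g : ℂ → ℂ) (hg : ∀ t : ℂ, t ≠ 0 → ContinuousAt g t) (t : ℂ) (ht : t ≠ 0)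
    (h0 : ∀ n : ℤ, ∫ θ in (0:ℝ)..2 * Real.pi,
      (t * Complex.exp (θ * Complex.I)) ^ (-n) * g (t * Complex.exp (θ * Complex.I)) = 0) :
    g t = 0 := by
  have : Fact (0 < 2 * Real.pi) := ⟨Real.two_pi_pos⟩
  let F : C(AddCircle (2 * Real.pi), ℂ) :=
    ⟨fun y => g (t * (AddCircle.toCircle y : ℂ)), by
      rw [continuous_iff_continuousAt]
      intro y
      have h1 : ContinuousAt (fun y : AddCircle (2 * Real.pi) => t * (AddCircle.toCircle y : ℂ)) y := by
        have := (AddCircle.continuous_toCircle (T := 2 * Real.pi))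
        exact (continuous_const.mul (continuous_subtype_val.comp this)).continuousAt
      exact ContinuousAt.comp (f := fun y : AddCircle (2 * Real.pi) => t * (AddCircle.toCircle y : ℂ))
        (hg _ (mul_ne_zero ht (Circle.coe_ne_zero _))) h1⟩
  have hF : ∀ n, fourierCoeff F n = 0 := by
    intro n
    rw [fourierCoeff_eq_intervalIntegral F n 0, zero_add]
    have : ∫ θ in (0:ℝ)..2 * Real.pi, fourier (-n) (θ : AddCircle (2 * Real.pi)) • F (θ : AddCircle (2 * Real.pi)) =
      ∫ θ in (0:ℝ)..2 * Real.pi, t ^ n *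
      ((t * Complex.exp (θ * Complex.I)) ^ (-n) * g (t * Complex.exp (θ * Complex.I))) := by
      apply intervalIntegral.integral_congr
      intro θ _
      have e1 : (AddCircle.toCircle (θ : AddCircle (2 * Real.pi)) : ℂ) = Complex.exp (θ * Complex.I) := by
        rw [AddCircle.toCircle_apply_mk, Circle.coe_exp]
        congr 2
        have := Real.pi_ne_zero
        field_simp
      have e2 : (fourier (-n) (θ : AddCircle (2 * Real.pi)) : ℂ) = Complex.exp (θ * Complex.I) ^ (-n) := by
        rw [fourier_apply, AddCircle.toCircle_zsmul, Circle.coe_zpow, e1]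
      simp only [e2, F, ContinuousMap.coe_mk, e1, smul_eq_mul]
      rw [mul_zpow, ← mul_assoc, ← mul_assoc, ← zpow_add₀ ht]
      simp
    rw [this, intervalIntegral.integral_const_mul, h0 n]
    simp
  have hs : Summable (fourierCoeff F) := by
    have : fourierCoeff F = fun _ => 0 := funext hF
    rw [this]; exact summable_zero
  have := has_pointwise_sum_fourier_series_of_summable hs (0 : AddCircle (2 * Real.pi))
  simp only [hF, zero_smul] at this
  have h2 := this.unique hasSum_zero
  simpa [F] using h2

theorem holomorphic_solution_41x_vanishes
    (q : ℂ) (hq0 : 0 < ‖q‖) (hq1 : ‖q‖ < 1)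
    (x : ℂ) (hx : x ≠ 0) (hxq : ∀ n : ℤ, x ≠ q ^ n)
    (h : ℂ → ℂ) (hhol : ∀ t : ℂ, t ≠ 0 → DifferentiableAt ℂ h t)
    (heq : ∀ t : ℂ, t ≠ 0 →
      t * q⁻¹ * h (q⁻¹ * t) + (1 - (x + x⁻¹) * t) * h t + t * q * h (q * t) = 0) :
    ∀ t : ℂ, t ≠ 0 → h t = 0 := by
  have hq : q ≠ 0 := norm_pos_iff.1 hq0
  let f : ℤ → ℂ → ℂ := fun n z => z ^ (-n) * h z
  have hf : ∀ n, ∀ t : ℂ, t ≠ 0 → DifferentiableAt ℂ (f n) t := fun n t ht =>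
    (differentiableAt_zpow.2 (Or.inl ht)).mul (hhol t ht)
  let a : ℤ → ℂ := fun n => ∫ θ in (0:ℝ)..2 * Real.pi, f n (Complex.exp (θ * Complex.I))
  have ha : ∀ n, ∀ w : ℂ, w ≠ 0 →
      ∫ θ in (0:ℝ)..2 * Real.pi, f n (w * Complex.exp (θ * Complex.I)) = a n :=
    fun n w hw => aux_avg_const (f n) (hf n) w hw
  have hcont : ∀ n, ∀ w : ℂ, w ≠ 0 →
      Continuous (fun θ : ℝ => f n (w * Complex.exp (θ * Complex.I))) := by
    intro n w hw
    rw [continuous_iff_continuousAt]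
    intro θ
    exact ContinuousAt.comp (f := fun θ : ℝ => w * Complex.exp (θ * Complex.I))
      (hf n _ (mul_ne_zero hw (Complex.exp_ne_zero _))).continuousAt (by fun_prop)
  have hrec : ∀ n : ℤ, a (n + 1) = ((x + x⁻¹) - q ^ (n + 1) - (q ^ (n + 1))⁻¹) * a n := by
    intro n
    have hint : ∀ m, ∀ w : ℂ, w ≠ 0 → IntervalIntegrable
        (fun θ : ℝ => f m (w * Complex.exp (θ * Complex.I))) MeasureTheory.volume 0 (2 * Real.pi) :=
      fun m w hw => (hcont m w hw).intervalIntegrable _ _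
    have e : ∫ θ in (0:ℝ)..2 * Real.pi, f (n + 1) (1 * Complex.exp (θ * Complex.I)) =
        ∫ θ in (0:ℝ)..2 * Real.pi, ((x + x⁻¹) * f n (1 * Complex.exp (θ * Complex.I))
          - q ^ (n + 1) * f n (q * Complex.exp (θ * Complex.I))
          - (q ^ (n + 1))⁻¹ * f n (q⁻¹ * Complex.exp (θ * Complex.I))) := by
      apply intervalIntegral.integral_congr
      intro θ _
      simp only [one_mul, f]
      generalize hz : Complex.exp (θ * Complex.I) = z
      have hz0 : z ≠ 0 := hz ▸ Complex.exp_ne_zero _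
      have := heq z hz0
      have hh : h z = (x + x⁻¹) * z * h z - z * q * h (q * z) - z * q⁻¹ * h (q⁻¹ * z) := by
        linear_combination this
      have e1 : z ^ (-(n + 1)) * z = z ^ (-n) := by
        rw [← zpow_add_one₀ hz0]; congr 1; ring
      have e2 : q ^ (n + 1) * (q * z) ^ (-n) = q * z ^ (-n) := by
        rw [mul_zpow, ← mul_assoc, ← zpow_add₀ hq]; simp
      have e3 : (q ^ (n + 1))⁻¹ * (q⁻¹ * z) ^ (-n) = q⁻¹ * z ^ (-n) := by
        rw [mul_zpow, ← mul_assoc, inv_zpow', neg_neg, ← zpow_neg, ← zpow_add₀ hq]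
        simp
      rw [← mul_assoc (q ^ (n+1)), ← mul_assoc (q ^ (n+1))⁻¹, e2, e3, ← e1]
      linear_combination z ^ (-(n + 1)) * hh
    have hqi := inv_ne_zero hq
    rw [intervalIntegral.integral_sub, intervalIntegral.integral_sub,
      intervalIntegral.integral_const_mul, intervalIntegral.integral_const_mul,
      intervalIntegral.integral_const_mul, ha _ _ one_ne_zero, ha _ _ one_ne_zero, ha _ _ hq,
      ha _ _ hqi] at e
    · rw [e]; ring
    · exact (hint n 1 one_ne_zero).const_mul _
    · exact (hint n q hq).const_mul _
    · exact ((hint n 1 one_ne_zero).const_mul _).sub ((hint n q hq).const_mul _)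
    · exact (hint n _ hqi).const_mul _
  have hc : ∀ k : ℤ, (x + x⁻¹) - q ^ k - (q ^ k)⁻¹ ≠ 0 := by
    intro k hk
    have hqk : q ^ k ≠ 0 := zpow_ne_zero _ hq
    have : (x - q ^ k) * (x - (q ^ k)⁻¹) = 0 := by
      have : (x - q ^ k) * (x - (q ^ k)⁻¹) = x * ((x + x⁻¹) - q ^ k - (q ^ k)⁻¹) := by
        field_simp; ring
      rw [this, hk, mul_zero]
    rcases mul_eq_zero.1 this with h1 | h1
    · exact hxq k (sub_eq_zero.1 h1)
    · exact hxq (-k) (by rw [zpow_neg]; exact sub_eq_zero.1 h1)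
  -- boundedness
  obtain ⟨C, hC⟩ : ∃ C : ℝ, ∀ n, ‖a n‖ ≤ C := by
    obtain ⟨C, hC⟩ := (isCompact_Icc (a := (0:ℝ)) (b := 2 * Real.pi)).exists_bound_of_continuousOn
      (hcont 0 1 one_ne_zero).continuousOn
    refine ⟨C * |2 * Real.pi - 0|, fun n => ?_⟩
    refine intervalIntegral.norm_integral_le_of_norm_le_const ?_
    intro θ hθ
    rw [Set.uIoc_of_le Real.two_pi_pos.le] at hθ
    have := hC θ ⟨hθ.1.le, hθ.2⟩
    simpa [f, norm_zpow, Complex.norm_exp_ofReal_mul_I] using this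
  -- growth
  obtain ⟨N, hN⟩ : ∃ N : ℕ, ∀ k : ℕ, N ≤ k →
      2 ≤ ‖(x + x⁻¹) - q ^ ((k : ℤ) + 1) - (q ^ ((k : ℤ) + 1))⁻¹‖ := by
    have ht : Filter.Tendsto (fun k : ℕ => (‖q‖⁻¹) ^ k) Filter.atTop Filter.atTop :=
      tendsto_pow_atTop_atTop_of_one_lt ((one_lt_inv₀ hq0).2 hq1)
    obtain ⟨N, hN⟩ := Filter.eventually_atTop.1 (ht.eventually_ge_atTop (3 + ‖x + x⁻¹‖))
    refine ⟨N, fun k hk => ?_⟩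
    have h1 := hN (k + 1) (by omega)
    have h2 : ‖q ^ (k + 1)‖ ≤ 1 := by
      rw [norm_pow]; exact pow_le_one₀ hq0.le hq1.le
    have h3 : ‖(q ^ (k + 1))⁻¹‖ = (‖q‖⁻¹) ^ (k + 1) := by
      rw [norm_inv, norm_pow, inv_pow]
    have h4 := norm_sub_norm_le ((q ^ (k + 1))⁻¹) ((x + x⁻¹) - q ^ (k + 1))
    have h5 := norm_sub_le (x + x⁻¹) (q ^ (k + 1))
    rw [norm_sub_rev ((q ^ (k + 1))⁻¹)] at h4
    have : q ^ ((k : ℤ) + 1) = q ^ (k + 1) := by exact_mod_cast zpow_natCast q (k + 1)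
    rw [this]
    linarith
  have haN : a N = 0 := by
    have hg : ∀ m : ℕ, 2 ^ m * ‖a N‖ ≤ ‖a ((N + m : ℕ) : ℤ)‖ := by
      intro m
      induction m with
      | zero => simp
      | succ m ih =>
        have e : (((N + (m + 1) : ℕ)) : ℤ) = ((N + m : ℕ) : ℤ) + 1 := by push_cast; ring
        rw [e, hrec, norm_mul, pow_succ]
        have := hN (N + m) (by omega)
        nlinarith [norm_nonneg (a ((N + m : ℕ) : ℤ))]
    by_contra hne
    have hpos : 0 < ‖a N‖ := norm_pos_iff.2 hne
    obtain ⟨m, hm⟩ := pow_unbounded_of_one_lt (C / ‖a N‖) (one_lt_two : (1:ℝ) < 2)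
    rw [div_lt_iff₀ hpos] at hm
    linarith [hg m, hC ((N + m : ℕ) : ℤ)]
  have hall : ∀ n : ℤ, a n = 0 := by
    intro n
    have hup : ∀ m : ℕ, a ((N : ℤ) + m) = 0 := by
      intro m
      induction m with
      | zero => simpa using haN
      | succ m ih =>
        have := hrec ((N : ℤ) + m)
        rw [ih, mul_zero] at this
        rw [← this]; congr 1
    have hdown : ∀ m : ℕ, a ((N : ℤ) - m) = 0 := by
      intro m
      induction m with
      | zero => simpa using haN
      | succ m ih =>
        have := hrec ((N : ℤ) - (m + 1 : ℕ))
        rw [show (N : ℤ) - (m + 1 : ℕ) + 1 = N - m by push_cast; ring, ih] at this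
        exact (mul_eq_zero.1 this.symm).resolve_left (hc _)
    rcases le_total (N : ℤ) n with hn | hn
    · obtain ⟨m, hm⟩ := Int.le.dest hn
      rw [← hm]; exact hup m
    · obtain ⟨m, hm⟩ := Int.le.dest hn
      rw [show n = (N : ℤ) - m by omega]; exact hdown m
  intro t ht
  refine aux_fourier h (fun s hs => (hhol s hs).continuousAt) t ht ?_
  intro n
  rw [← hall n, ← ha n t ht]
end

section
/- Let q ∈ ℂ with 0 < |q| < 1, let x ∈ ℂ∖{0} with |q| < |x| < |q|^{−1}, and let ξ ∈ ℂ with |ξ| < 1. Then Σ_{k=0}^∞ (qx;q)_k (qx^{−1};q)_k ξ^k = (qx;q)_∞ (qx^{−1};q)_∞ · Σ_{n=0}^∞ Σ_{ℓ=0}^{n} q^n x^{2ℓ−n} / ((q;q)_ℓ (q;q)_{n−ℓ} (1 − q^n ξ)). In particular the right-hand side provides the meromorphic continuation of the q-Borel transform of the divergent series Σ_k (−1)^k q^{−k(k+1)/2}(qx;q)_k(qx^{−1};q)_k t^k, with simple poles only at ξ ∈ q^{−ℕ}. -/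
open Finset Filter

lemma bt_qPoch_ne {q : ℂ} (hq1 : ‖q‖ < 1) (n : ℕ) : qPoch q q n ≠ 0 := by
  unfold qPoch
  refine Finset.prod_ne_zero_iff.mpr fun j _ h => ?_
  have h1 : q ^ (j + 1) = 1 := by rw [pow_succ']; exact (sub_eq_zero.mp h).symm
  have h2 : ‖q‖ ^ (j + 1) < 1 := pow_lt_one₀ (norm_nonneg _) hq1 (by omega)
  rw [← norm_pow, h1, norm_one] at h2
  exact lt_irrefl _ h2

lemma bt_qPoch_succ (z q : ℂ) (n : ℕ) : qPoch z q (n + 1) = qPoch z q n * (1 - z * q ^ n) := by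
  unfold qPoch
  rw [Finset.prod_range_succ]

lemma bt_pow_tendsto {q : ℂ} (hq1 : ‖q‖ < 1) : Tendsto (fun n : ℕ => q ^ n) atTop (nhds 0) :=
  tendsto_pow_atTop_nhds_zero_of_norm_lt_one hq1

lemma bt_summable {q z : ℂ} (hq1 : ‖q‖ < 1) (hz : z ≠ 0) (hz1 : ‖z‖ < 1) :
    Summable fun n : ℕ => ‖z ^ n / qPoch q q n‖ := by
  have hne := bt_qPoch_ne hq1
  refine summable_of_ratio_test_tendsto_lt_one (l := ‖z‖) hz1
    (Eventually.of_forall fun n => norm_ne_zero_iff.mpr (div_ne_zero (pow_ne_zero _ hz) (hne n))) ?_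
  have h1 : Tendsto (fun n : ℕ => ‖z / (1 - q * q ^ n)‖) atTop (nhds ‖z / (1 - q * 0)‖) := by
    refine (Tendsto.div tendsto_const_nhds
      (tendsto_const_nhds.sub (tendsto_const_nhds.mul (bt_pow_tendsto hq1))) (by simp)).norm
  rw [mul_zero, sub_zero, div_one] at h1
  refine h1.congr fun n => ?_
  rw [norm_norm, norm_norm, ← norm_div]
  congr 1
  have h2 := hne (n + 1)
  rw [bt_qPoch_succ] at h2 ⊢
  have h3 := left_ne_zero_of_mul h2
  have h4 := right_ne_zero_of_mul h2
  field_simp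
  ring

/-- One step of the functional equation. -/
lemma bt_step {q z : ℂ} (hq1 : ‖q‖ < 1)
    (hs : Summable fun n : ℕ => z ^ n / qPoch q q n)
    (hs2 : Summable fun n : ℕ => (q * z) ^ n / qPoch q q n) :
    ∑' n : ℕ, (q * z) ^ n / qPoch q q n = (1 - z) * ∑' n : ℕ, z ^ n / qPoch q q n := by
  have hne := bt_qPoch_ne hq1
  have h : ∑' n : ℕ, (z ^ n / qPoch q q n - (q * z) ^ n / qPoch q q n)
      = z * ∑' n : ℕ, z ^ n / qPoch q q n := by
    rw [(hs.sub hs2).tsum_eq_zero_add, ← tsum_mul_left]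
    simp only [pow_zero, sub_self, zero_add]
    refine tsum_congr fun n => ?_
    have h2 := hne (n + 1)
    rw [bt_qPoch_succ] at h2 ⊢
    have h3 := left_ne_zero_of_mul h2
    have h4 := right_ne_zero_of_mul h2
    field_simp
    ring
  rw [hs.tsum_sub hs2] at h
  linear_combination -h

lemma bt_iter {q z : ℂ} (hq0 : q ≠ 0) (hq1 : ‖q‖ < 1) (hz : z ≠ 0) (hz1 : ‖z‖ < 1) (k : ℕ) :
    ∑' n : ℕ, (q ^ k * z) ^ n / qPoch q q n = qPoch z q k * ∑' n : ℕ, z ^ n / qPoch q q n := by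
  have hs : ∀ k : ℕ, Summable fun n : ℕ => (q ^ k * z) ^ n / qPoch q q n := fun k =>
    (bt_summable hq1 (mul_ne_zero (pow_ne_zero _ hq0) hz) (by
      rw [norm_mul, norm_pow]
      exact lt_of_le_of_lt (mul_le_of_le_one_left (norm_nonneg _)
        (pow_le_one₀ (norm_nonneg _) hq1.le)) hz1)).of_norm
  induction k with
  | zero => simp [qPoch]
  | succ k ih =>
    have e : q ^ (k + 1) * z = q * (q ^ k * z) := by ring
    have h2 := hs (k + 1)
    rw [e] at h2 ⊢
    rw [bt_step hq1 (hs k) h2, ih, bt_qPoch_succ]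
    ring

lemma bt_prod_tendsto {q : ℂ} (hq1 : ‖q‖ < 1) (z : ℂ) :
    Tendsto (fun k : ℕ => qPoch z q k) atTop (nhds (qPochInf z q)) := by
  have h : Multipliable fun j : ℕ => (1 + (-(z * q ^ j))) := by
    apply multipliable_one_add_of_summable
    simp only [norm_neg, norm_mul, norm_pow]
    exact (summable_geometric_of_lt_one (norm_nonneg _) hq1).mul_left _
  simp only [← sub_eq_add_neg] at h
  exact h.hasProd.tendsto_prod_nat

lemma bt_euler {q z : ℂ} (hq0 : q ≠ 0) (hq1 : ‖q‖ < 1) (hz : z ≠ 0) (hz1 : ‖z‖ < 1) :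
    qPochInf z q * ∑' n : ℕ, z ^ n / qPoch q q n = 1 := by
  have h1 : Tendsto (fun k : ℕ => ∑' n : ℕ, (q ^ k * z) ^ n / qPoch q q n) atTop
      (nhds (∑' n : ℕ, (0 * z) ^ n / qPoch q q n)) := by
    refine tendsto_tsum_of_dominated_convergence (bt_summable hq1 hz hz1) (fun n => ?_)
      (Eventually.of_forall fun k n => ?_)
    · exact (((bt_pow_tendsto hq1).mul_const z).pow n).div_const _
    · rw [norm_div, norm_div, mul_pow, norm_mul]
      gcongr
      refine mul_le_of_le_one_left (norm_nonneg _) ?_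
      rw [norm_pow, norm_pow]
      exact pow_le_one₀ (by positivity) (pow_le_one₀ (norm_nonneg _) hq1.le)
  have h2 : ∑' n : ℕ, (0 * z) ^ n / qPoch q q n = 1 := by
    rw [tsum_eq_single 0]
    · simp [qPoch]
    · intro n hn
      simp [hn]
  rw [h2] at h1
  refine tendsto_nhds_unique ?_ h1
  simp only [bt_iter hq0 hq1 hz hz1]
  exact (bt_prod_tendsto hq1 z).mul_const _

lemma bt_fin {q z : ℂ} (hq0 : q ≠ 0) (hq1 : ‖q‖ < 1) (hz : z ≠ 0) (hz1 : ‖z‖ < 1) (k : ℕ) :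
    qPoch z q k = qPochInf z q * ∑' n : ℕ, (q ^ k * z) ^ n / qPoch q q n := by
  rw [bt_iter hq0 hq1 hz hz1]
  linear_combination -(qPoch z q k) * bt_euler hq0 hq1 hz hz1

lemma bt_term1 (q z w ξ : ℂ) (k : ℕ) {l n : ℕ} (h : l ≤ n) :
    z ^ l / qPoch q q l * (w ^ (n - l) / qPoch q q (n - l)) * (q ^ n * ξ) ^ k =
      (q ^ k * z) ^ l / qPoch q q l * ((q ^ k * w) ^ (n - l) / qPoch q q (n - l)) * ξ ^ k := by
  obtain ⟨m, hm⟩ := Nat.exists_eq_add_of_le h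
  have e : n - l = m := by omega
  rw [e, hm]
  generalize qPoch q q l = A
  generalize qPoch q q m = B
  simp only [div_eq_mul_inv]
  generalize A⁻¹ = A
  generalize B⁻¹ = B
  rw [mul_pow (q ^ k), mul_pow (q ^ k), mul_pow (q ^ (l + m)), ← pow_mul, ← pow_mul, ← pow_mul,
    add_mul, pow_add, mul_comm l k, mul_comm m k]
  ring

lemma bt_term2 (q ξ : ℂ) {x : ℂ} (hx : x ≠ 0) {l n : ℕ} (h : l ≤ n) :
    (q * x) ^ l / qPoch q q l * ((q * x⁻¹) ^ (n - l) / qPoch q q (n - l)) * (1 - q ^ n * ξ)⁻¹ =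
      q ^ n * x ^ (2 * (l : ℤ) - n) /
            (qPoch q q l * qPoch q q (n - l) * (1 - q ^ n * ξ)) := by
  obtain ⟨m, hm⟩ := Nat.exists_eq_add_of_le h
  have e : n - l = m := by omega
  have e2 : (2 * (l : ℤ) - (n : ℤ)) = (l : ℤ) - (m : ℤ) := by omega
  have e3 : q ^ n = q ^ l * q ^ m := by rw [hm, pow_add]
  rw [e, e2, zpow_sub₀ hx, zpow_natCast, zpow_natCast, mul_pow, mul_pow, inv_pow]
  simp only [div_eq_mul_inv, mul_inv]
  generalize (1 - q ^ n * ξ)⁻¹ = D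
  rw [e3]
  ring

lemma bt_main
    (q : ℂ) (hq0 : 0 < ‖q‖) (hq1 : ‖q‖ < 1)
    (x : ℂ) (hx : x ≠ 0)
    (hx1 : ‖q‖ < ‖x‖) (hx2 : ‖x‖ < ‖q‖⁻¹)
    (ξ : ℂ) (hξ : ‖ξ‖ < 1) :
    ∑' k : ℕ, qPoch (q * x) q k * qPoch (q * x⁻¹) q k * ξ ^ k =
      qPochInf (q * x) q * qPochInf (q * x⁻¹) q *
        ∑' n : ℕ, ∑ l ∈ Finset.range (n + 1),
          q ^ n * x ^ (2 * (l : ℤ) - n) /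
            (qPoch q q l * qPoch q q (n - l) * (1 - q ^ n * ξ)) := by
  have hq : q ≠ 0 := norm_pos_iff.mp hq0
  have hz : q * x ≠ 0 := mul_ne_zero hq hx
  have hw : q * x⁻¹ ≠ 0 := mul_ne_zero hq (inv_ne_zero hx)
  have hz1 : ‖q * x‖ < 1 := by
    rw [norm_mul]
    calc ‖q‖ * ‖x‖ < ‖q‖ * ‖q‖⁻¹ := by gcongr
      _ = 1 := mul_inv_cancel₀ hq0.ne'
  have hw1 : ‖q * x⁻¹‖ < 1 := by
    rw [norm_mul, norm_inv, ← div_eq_mul_inv, div_lt_one (norm_pos_iff.mpr hx)]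
    exact hx1
  have hsm : ∀ (z : ℂ), z ≠ 0 → ‖z‖ < 1 → ∀ k : ℕ,
      Summable fun n : ℕ => ‖(q ^ k * z) ^ n / qPoch q q n‖ := fun z hz hz1 k =>
    bt_summable hq1 (mul_ne_zero (pow_ne_zero _ hq) hz) (by
      rw [norm_mul, norm_pow]
      exact lt_of_le_of_lt (mul_le_of_le_one_left (norm_nonneg _)
        (pow_le_one₀ (norm_nonneg _) hq1.le)) hz1)
  obtain ⟨C, hC⟩ : ∃ C : ℕ → ℂ, ∀ n, C n = ∑ l ∈ Finset.range (n + 1),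
    ((q * x) ^ l / qPoch q q l) * ((q * x⁻¹) ^ (n - l) / qPoch q q (n - l)) :=
    ⟨_, fun _ => rfl⟩
  have hCs : Summable fun n => ‖C n‖ := by
    simp only [hC]
    exact summable_norm_sum_mul_range_of_summable_norm
      (f := fun n : ℕ => (q * x) ^ n / qPoch q q n) (g := fun n : ℕ => (q * x⁻¹) ^ n / qPoch q q n)
      (bt_summable hq1 hz hz1) (bt_summable hq1 hw hw1)
  have hL : ∀ k : ℕ, qPoch (q * x) q k * qPoch (q * x⁻¹) q k * ξ ^ k =
      qPochInf (q * x) q * qPochInf (q * x⁻¹) q * ∑' n : ℕ, C n * (q ^ n * ξ) ^ k := by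
    intro k
    have h := tsum_mul_tsum_eq_tsum_sum_range_of_summable_norm
      (f := fun n : ℕ => (q ^ k * (q * x)) ^ n / qPoch q q n)
      (g := fun n : ℕ => (q ^ k * (q * x⁻¹)) ^ n / qPoch q q n)
      (hsm _ hz hz1 k) (hsm _ hw hw1 k)
    have h' : ∑' n : ℕ, C n * (q ^ n * ξ) ^ k = (∑' n : ℕ, ∑ l ∈ Finset.range (n + 1),
        ((q ^ k * (q * x)) ^ l / qPoch q q l) *
          ((q ^ k * (q * x⁻¹)) ^ (n - l) / qPoch q q (n - l))) * ξ ^ k := by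
      rw [← tsum_mul_right]
      refine tsum_congr fun n => ?_
      rw [hC, Finset.sum_mul, Finset.sum_mul]
      refine Finset.sum_congr rfl fun l hl => ?_
      have hln : l ≤ n := by
        have := Finset.mem_range.mp hl
        omega
      exact bt_term1 q (q * x) (q * x⁻¹) ξ k hln
    rw [h', ← h, bt_fin hq hq1 hz hz1 k, bt_fin hq hq1 hw hw1 k]
    ring
  have hle : ∀ n : ℕ, ‖q ^ n * ξ‖ ≤ ‖ξ‖ := fun n => by
    rw [norm_mul, norm_pow]
    exact mul_le_of_le_one_left (norm_nonneg _) (pow_le_one₀ (norm_nonneg _) hq1.le)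
  have hsum : Summable (Function.uncurry fun (k n : ℕ) => C n * (q ^ n * ξ) ^ k) := by
    refine Summable.of_norm_bounded (g := fun p : ℕ × ℕ => ‖ξ‖ ^ p.1 * ‖C p.2‖)
      ((summable_geometric_of_lt_one (norm_nonneg _) hξ).mul_of_nonneg hCs
        (fun _ => by positivity) (fun _ => by positivity)) ?_
    rintro ⟨k, n⟩
    simp only [Function.uncurry]
    rw [norm_mul, norm_pow, mul_comm]
    gcongr
    exact hle n
  rw [tsum_congr hL, tsum_mul_left, ← hsum.tsum_comm]
  congr 1
  refine tsum_congr fun n => ?_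
  rw [tsum_mul_left, tsum_geometric_of_norm_lt_one ((hle n).trans_lt hξ), hC, Finset.sum_mul]
  refine Finset.sum_congr rfl fun l hl => ?_
  have hln : l ≤ n := by
    have := Finset.mem_range.mp hl
    omega
  exact bt_term2 q ξ hx hln

/-- Identity giving the meromorphic continuation of the q-Borel transform of the
divergent series `Σ_k (−1)^k q^{−k(k+1)/2}(qx;q)_k(qx^{−1};q)_k t^k`. -/
theorem borel_transform_continuation
    (q : ℂ) (hq0 : 0 < ‖q‖) (hq1 : ‖q‖ < 1)
    (x : ℂ) (hx : x ≠ 0)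
    (hx1 : ‖q‖ < ‖x‖) (hx2 : ‖x‖ < ‖q‖⁻¹)
    (ξ : ℂ) (hξ : ‖ξ‖ < 1) :
    ∑' k : ℕ, qPoch (q * x) q k * qPoch (q * x⁻¹) q k * ξ ^ k =
      qPochInf (q * x) q * qPochInf (q * x⁻¹) q *
        ∑' n : ℕ, ∑ l ∈ Finset.range (n + 1),
          q ^ n * x ^ (2 * (l : ℤ) - n) /
            (qPoch q q l * qPoch q q (n - l) * (1 - q ^ n * ξ)) := by
  exact bt_main q hq0 hq1 x hx hx1 hx2 ξ hξ
end
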